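/- arXiv:2105.15081 — 2 statements merged into one kernel-verified Lean document; each statement's English description precedes it below -/
import Mathlib

section
/- Let b_1,…,b_N be i.i.d. N(0, (1/N) I_{n−1}) Gaussian vectors and v ∈ ℝ^N a fixed vector. There is a universal constant C > 0 such that for any δ ∈ (0,1), with probability at least 1−δ, ‖Σ_{i=1}^N v_i² b_i b_iᵀ − (1/N) I_{n−1}‖ ≤ C( (√(n·log(N/δ))/N)·‖v‖₄² + ((n·log(N/δ) + log²(N/δ))/N)·‖v‖_∞² ) + |‖v‖² − 1|/N, where ‖·‖ on matrices denotes the spectral norm. -/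
open MeasureTheory ProbabilityTheory Matrix

/-- Euclidean norm of a vector in `ℝ^k`. -/
noncomputable def eucNorm {k : ℕ} (v : Fin k → ℝ) : ℝ := Real.sqrt (∑ i, (v i) ^ 2)

/-- ℓ_p norm of a vector in `ℝ^k`. -/
noncomputable def lpNorm {k : ℕ} (p : ℝ) (v : Fin k → ℝ) : ℝ := (∑ i, |v i| ^ p) ^ (1 / p)

/-- Supremum (ℓ_∞) norm of a vector in `ℝ^k`. -/
noncomputable def supNorm {k : ℕ} (v : Fin k → ℝ) : ℝ := ⨆ i, |v i|

/-- Spectral (ℓ₂ operator) norm of a real matrix. -/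
noncomputable def specNorm {m k : ℕ} (M : Matrix (Fin m) (Fin k) ℝ) : ℝ :=
  ‖LinearMap.toContinuousLinearMap (Matrix.toEuclideanLin M)‖

/-- The Gaussian measure `N(0, σ2 · I_k)` on `ℝ^k`. -/
noncomputable def gaussVec (k : ℕ) (σ2 : NNReal) : Measure (Fin k → ℝ) :=
  Measure.pi fun _ => gaussianReal 0 σ2

instance (k : ℕ) (σ2 : NNReal) : IsProbabilityMeasure (gaussVec k σ2) := by
  unfold gaussVec; infer_instance

/-- The law of `N` i.i.d. samples from `N(0, σ2 · I_k)`. -/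
noncomputable def iidGaussVec (N k : ℕ) (σ2 : NNReal) : Measure (Fin N → Fin k → ℝ) :=
  Measure.pi fun _ => gaussVec k σ2

/-!
For a fixed unit vector `x`, the numbers `⟨x, b_i⟩` are independent `N(0, 1/N)` variables, so
`∑ v_i² (⟨x, b_i⟩² - 1/N)` is a sum of independent centred sub-exponential variables and obeys a
Bernstein tail bound: it exceeds a multiple of `(√t ‖v‖₄² + t ‖v‖_∞²) / N` with probability at most
`2 e^{-t}`. A union bound over a `1/2`-net of fewer than `5^{n-1}` points of the sphere, with
`t = 4 n log (N/δ)`, costs a probability of at most `δ`. The net controls the spectral norm because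
`⟨Ax, x⟩ - ⟨Ay, y⟩ = ⟨A(x - y), x + y⟩` for symmetric `A`, and `‖x - y‖ ‖x + y‖` stays strictly
below `1` when `‖x - y‖ ≤ 1/2`. Replacing `(∑ v_i²) / N` by `1 / N` on the diagonal contributes
`|‖v‖² - 1| / N`.
-/

section Subexponential

variable {Ω : Type*} {mΩ : MeasurableSpace Ω} {μ : Measure Ω} {X : Ω → ℝ} {v c : ℝ}

/-- A random variable `X` has a sub-exponential moment generating function with variance proxy `v`
and scale `c` if its moment generating function is at most that of a centred Gaussian of variance
`v` on the interval `|l| ≤ 1 / c`. The interval is written `|l| * c ≤ 1`, so that it is all of `ℝ`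
for `c = 0`. -/
structure HasSubexponentialMGF (X : Ω → ℝ) (v c : ℝ) (μ : Measure Ω) : Prop where
  integrable_exp_mul : ∀ l : ℝ, |l| * c ≤ 1 → Integrable (fun ω => Real.exp (l * X ω)) μ
  mgf_le : ∀ l : ℝ, |l| * c ≤ 1 → mgf X μ l ≤ Real.exp (v * l ^ 2 / 2)

namespace HasSubexponentialMGF

lemma mono_scale {c' : ℝ} (h : HasSubexponentialMGF X v c μ) (hc : c ≤ c') :
    HasSubexponentialMGF X v c' μ := by
  have hl {l : ℝ} (hl : |l| * c' ≤ 1) : |l| * c ≤ 1 :=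
    (mul_le_mul_of_nonneg_left hc (abs_nonneg l)).trans hl
  exact ⟨fun l h' => h.integrable_exp_mul l (hl h'), fun l h' => h.mgf_le l (hl h')⟩

protected lemma const_mul (h : HasSubexponentialMGF X v c μ) (r : ℝ) :
    HasSubexponentialMGF (fun ω => r * X ω) (r ^ 2 * v) (|r| * c) μ := by
  have hl {l : ℝ} (hl : |l| * (|r| * c) ≤ 1) : |l * r| * c ≤ 1 := by rwa [abs_mul, mul_assoc]
  refine ⟨fun l h' => ?_, fun l h' => ?_⟩
  · simpa only [mul_assoc] using h.integrable_exp_mul (l * r) (hl h')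
  · rw [mgf_const_mul, mul_comm r l]
    exact (h.mgf_le (l * r) (hl h')).trans_eq (by ring_nf)

lemma of_map {Ω' : Type*} {mΩ' : MeasurableSpace Ω'} {ν : Measure Ω'} {Y : Ω' → Ω}
    (hY : AEMeasurable Y ν) (h : HasSubexponentialMGF X v c (ν.map Y)) :
    HasSubexponentialMGF (X ∘ Y) v c ν where
  integrable_exp_mul l hl := (h.integrable_exp_mul l hl).comp_aemeasurable hY
  mgf_le l hl := by
    rw [← mgf_map hY (h.integrable_exp_mul l hl).aestronglyMeasurable]
    exact h.mgf_le l hl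

lemma sum_of_iIndepFun {ι : Type*} [Fintype ι] {X : ι → Ω → ℝ} {v : ι → ℝ}
    (h_indep : iIndepFun X μ) (h_meas : ∀ i, Measurable (X i))
    (h : ∀ i, HasSubexponentialMGF (X i) (v i) c μ) :
    HasSubexponentialMGF (∑ i, X i) (∑ i, v i) c μ where
  integrable_exp_mul l hl :=
    have := h_indep.isProbabilityMeasure
    h_indep.integrable_exp_mul_sum h_meas fun i _ => (h i).integrable_exp_mul l hl
  mgf_le l hl :=
    calc mgf (∑ i, X i) μ l = ∏ i, mgf (X i) μ l := h_indep.mgf_sum h_meas _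
      _ ≤ ∏ i, Real.exp (v i * l ^ 2 / 2) :=
          Finset.prod_le_prod (fun _ _ => mgf_nonneg) fun i _ => (h i).mgf_le l hl
      _ = Real.exp ((∑ i, v i) * l ^ 2 / 2) := by
          rw [← Real.exp_sum, Finset.sum_mul, Finset.sum_div]

lemma measureReal_ge_le [IsFiniteMeasure μ] (h : HasSubexponentialMGF X v c μ) (hv : 0 ≤ v)
    (hc : 0 < c) {t : ℝ} (ht : 0 < t) :
    μ.real {ω | √(2 * v * t) + c * t ≤ X ω} ≤ Real.exp (-t) := by
  set r := √(v / (2 * t)) with hr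
  -- Up to a factor `2`, `l` is the smaller of the unconstrained optimum `1 / r` and the largest
  -- admissible value `1 / c`.
  set l := (r + c)⁻¹ with hl
  have hr0 : 0 ≤ r := Real.sqrt_nonneg _
  have hv_eq : v = 2 * t * r ^ 2 := by
    rw [hr, Real.sq_sqrt (by positivity)]
    field_simp
  have hsqrt : √(2 * v * t) = 2 * r * t := by
    rw [hv_eq, show 2 * (2 * t * r ^ 2) * t = (2 * r * t) ^ 2 by ring,
      Real.sqrt_sq (by positivity)]
  have hlc : |l| * c ≤ 1 := by
    rw [hl, abs_of_nonneg (by positivity), inv_mul_le_iff₀ (by positivity)]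
    linarith
  have hexponent : -l * (√(2 * v * t) + c * t) + v * l ^ 2 / 2 ≤ -t := by
    have hlr : l * r ≤ 1 := by
      rw [hl, inv_mul_le_iff₀ (by positivity)]
      linarith
    have hlrc : l * (r + c) = 1 := inv_mul_cancel₀ (by positivity)
    calc -l * (√(2 * v * t) + c * t) + v * l ^ 2 / 2
        = -t * (l * (r + c)) - t * (l * r) * (1 - l * r) := by rw [hsqrt, hv_eq]; ring
      _ ≤ -t := by
          rw [hlrc, mul_one, sub_le_self_iff]
          exact mul_nonneg (by positivity) (sub_nonneg.mpr hlr)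
  calc μ.real {ω | √(2 * v * t) + c * t ≤ X ω}
      ≤ Real.exp (-l * (√(2 * v * t) + c * t)) * mgf X μ l :=
        measure_ge_le_exp_mul_mgf _ (by positivity) (h.integrable_exp_mul l hlc)
    _ ≤ Real.exp (-l * (√(2 * v * t) + c * t)) * Real.exp (v * l ^ 2 / 2) := by
        gcongr
        exact h.mgf_le l hlc
    _ ≤ Real.exp (-t) := by
        rw [← Real.exp_add]
        exact Real.exp_le_exp.mpr hexponent

lemma measureReal_abs_ge_le [IsFiniteMeasure μ] (h : HasSubexponentialMGF X v c μ) (hv : 0 ≤ v)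
    (hc : 0 < c) {t : ℝ} (ht : 0 < t) :
    μ.real {ω | √(2 * v * t) + c * t ≤ |X ω|} ≤ 2 * Real.exp (-t) := by
  have h_neg : HasSubexponentialMGF (fun ω => -X ω) v c μ := by simpa using h.const_mul (-1)
  calc μ.real {ω | √(2 * v * t) + c * t ≤ |X ω|}
      ≤ μ.real ({ω | √(2 * v * t) + c * t ≤ X ω} ∪ {ω | √(2 * v * t) + c * t ≤ -X ω}) := by
        simp only [le_abs, Set.ofPred_or, le_refl]
    _ ≤ Real.exp (-t) + Real.exp (-t) := (measureReal_union_le _ _).trans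
        (add_le_add (h.measureReal_ge_le hv hc ht) (h_neg.measureReal_ge_le hv hc ht))
    _ = 2 * Real.exp (-t) := (two_mul _).symm

end HasSubexponentialMGF

end Subexponential

section GaussianSquare

variable {w : NNReal} {l : ℝ}

lemma inv_one_sub_le_exp {u : ℝ} (hu : |u| ≤ 1 / 2) : (1 - u)⁻¹ ≤ Real.exp (u + 2 * u ^ 2) := by
  have hpos : 0 < 1 - u := by linarith [le_abs_self u]
  have hlog : |u + Real.log (1 - u)| ≤ u ^ 2 / (1 - |u|) := by
    simpa using Real.abs_log_sub_add_sum_range_le (hu.trans_lt one_half_lt_one) 1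
  have hquot : u ^ 2 / (1 - |u|) ≤ 2 * u ^ 2 := by
    rw [div_le_iff₀ (by linarith)]
    nlinarith [sq_nonneg u]
  rw [← Real.log_le_iff_le_exp (inv_pos.mpr hpos), Real.log_inv]
  linarith [(abs_le.mp hlog).1]

lemma gaussianPDFReal_mul_exp_mul_sq (hw : w ≠ 0) (l y : ℝ) :
    gaussianPDFReal 0 w y * Real.exp (l * y ^ 2)
      = (√(2 * Real.pi * w))⁻¹ * Real.exp (-((1 - 2 * w * l) / (2 * w)) * y ^ 2) := by
  rw [gaussianPDFReal, mul_assoc, ← Real.exp_add]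
  congr 2
  field_simp
  ring

lemma integrable_exp_mul_sq_gaussianReal (hw : w ≠ 0) (hl : 2 * w * l < 1) :
    Integrable (fun y : ℝ => Real.exp (l * y ^ 2)) (gaussianReal 0 w) := by
  have hb : 0 < (1 - 2 * w * l) / (2 * w) := div_pos (sub_pos.mpr hl) (by positivity)
  rw [gaussianReal_of_var_ne_zero _ hw, integrable_withDensity_iff_integrable_smul' (by fun_prop)
    (ae_of_all _ fun _ => gaussianPDF_lt_top)]
  simpa only [toReal_gaussianPDF, smul_eq_mul, gaussianPDFReal_mul_exp_mul_sq hw] using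
    (integrable_exp_neg_mul_sq hb).const_mul _

lemma mgf_sq_gaussianReal (hw : w ≠ 0) (hl : 2 * w * l < 1) :
    mgf (fun y => y ^ 2) (gaussianReal 0 w) l = √((1 - 2 * w * l)⁻¹) := by
  have hne : 1 - 2 * w * l ≠ 0 := (sub_pos.mpr hl).ne'
  simp only [mgf, integral_gaussianReal_eq_integral_smul hw, smul_eq_mul,
    gaussianPDFReal_mul_exp_mul_sq hw]
  rw [integral_const_mul, integral_gaussian, ← Real.sqrt_inv, ← Real.sqrt_mul (by positivity)]
  congr 1
  field_simp

lemma hasSubexponentialMGF_sq_sub_gaussianReal (hw : w ≠ 0) :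
    HasSubexponentialMGF (fun y => y ^ 2 - w) (8 * w ^ 2) (4 * w) (gaussianReal 0 w) := by
  have hu {l : ℝ} (hl : |l| * (4 * w) ≤ 1) : |2 * w * l| ≤ 1 / 2 := by
    rw [abs_mul, abs_of_nonneg (by positivity)]
    linarith
  have hlt {l : ℝ} (hl : |l| * (4 * w) ≤ 1) : 2 * w * l < 1 :=
    ((le_abs_self _).trans (hu hl)).trans_lt one_half_lt_one
  refine ⟨fun l hl => ?_, fun l hl => ?_⟩
  · simpa only [mul_sub, Real.exp_sub] using
      (integrable_exp_mul_sq_gaussianReal hw (hlt hl)).div_const (Real.exp (l * w))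
  calc mgf (fun y => y ^ 2 - (w : ℝ)) (gaussianReal 0 w) l
      = √((1 - 2 * w * l)⁻¹) * Real.exp (l * -w) := by
        simp only [sub_eq_add_neg (_ ^ 2), mgf_add_const, mgf_sq_gaussianReal hw (hlt hl)]
    _ ≤ √(Real.exp (2 * w * l + 2 * (2 * w * l) ^ 2)) * Real.exp (l * -w) := by
        gcongr
        exact inv_one_sub_le_exp (hu hl)
    _ = Real.exp (8 * w ^ 2 * l ^ 2 / 2) := by
        rw [← Real.exp_half, ← Real.exp_add]
        ring_nf

end GaussianSquare

section GaussianVector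

lemma map_sum_mul_pi_gaussianReal {ι : Type*} [Fintype ι] (m : ι → ℝ) (s : ι → NNReal)
    (x : ι → ℝ) :
    (Measure.pi fun i => gaussianReal (m i) (s i)).map (fun b => ∑ i, x i * b i)
      = gaussianReal (∑ i, x i * m i) (∑ i, ‖x i‖₊ ^ 2 * s i) := by
  set μ := Measure.pi fun i => gaussianReal (m i) (s i)
  have h_indep : iIndepFun (fun i (b : ι → ℝ) => x i * b i) μ :=
    iIndepFun_pi (X := fun i y => x i * y) fun i => by fun_prop
  have h_sq (i : ι) : (NNReal.mk (x i ^ 2) (sq_nonneg _)) = ‖x i‖₊ ^ 2 := by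
    ext
    simp
  have h_map (i : ι) : μ.map (fun b => x i * b i)
      = gaussianReal (x i * m i) (‖x i‖₊ ^ 2 * s i) := by
    rw [← h_sq, ← gaussianReal_map_const_mul,
      ← (measurePreserving_eval (fun i => gaussianReal (m i) (s i)) i).map_eq,
      Measure.map_map (by fun_prop) (by fun_prop)]
    rfl
  have := Measure.isProbabilityMeasure_map (μ := μ)
    (by fun_prop : Measurable fun b : ι → ℝ => ∑ i, x i * b i).aemeasurable
  refine Measure.ext_of_charFun ?_
  rw [h_indep.charFun_map_fun_sum_eq_prod fun i =>
    ((measurable_pi_apply i).const_mul (x i)).aemeasurable]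
  ext t
  simp only [Finset.prod_apply, h_map, charFun_gaussianReal, ← Complex.exp_sum]
  congr 1
  push_cast
  simp only [Finset.sum_sub_distrib, Finset.mul_sum, Finset.sum_mul, Finset.sum_div]

variable {N k : ℕ} {w : NNReal}

instance : IsProbabilityMeasure (iidGaussVec N k w) := by
  unfold iidGaussVec
  infer_instance

lemma gaussVec_map_dotProduct {x : EuclideanSpace ℝ (Fin k)} (hx : ‖x‖ = 1) :
    (gaussVec k w).map (fun b => x ⬝ᵥ b) = gaussianReal 0 w := by
  have hsum : ∑ j, ‖x j‖₊ ^ 2 = 1 := by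
    ext
    push_cast
    rw [← EuclideanSpace.norm_sq_eq, hx, one_pow]
  simpa [gaussVec, dotProduct, ← Finset.sum_mul, hsum] using
    map_sum_mul_pi_gaussianReal (fun _ => 0) (fun _ => w) x

end GaussianVector

section SphereNet

open Metric

variable {E : Type*} [NormedAddCommGroup E] [NormedSpace ℝ E] [FiniteDimensional ℝ E]

lemma card_lt_five_pow_finrank_of_isSeparated {s : Finset E} (hs : (s : Set E) ⊆ sphere 0 1)
    (hsep : IsSeparated (1 / 2 : NNReal) (s : Set E)) : s.card < 5 ^ Module.finrank ℝ E := by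
  classical
  have h_norm {c : E} (hc : c ∈ s) : ‖(2 : ℝ) • c‖ = 2 := by
    rw [norm_smul, mem_sphere_zero_iff_norm.mp (hs hc), Real.norm_two, mul_one]
  have h_sep : ∀ c ∈ s, ∀ d ∈ s, (2 : ℝ) • c ≠ (2 : ℝ) • d → 1 ≤ ‖(2 : ℝ) • c - (2 : ℝ) • d‖ := by
    intro c hc d hd hcd
    have h : ((1 / 2 : NNReal) : ENNReal) < edist c d := hsep hc hd fun h => hcd (h ▸ rfl)
    rw [edist_nndist, ENNReal.coe_lt_coe, ← NNReal.coe_lt_coe, coe_nndist, dist_eq_norm] at h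
    rw [← smul_sub, norm_smul, Real.norm_two]
    norm_num at h
    linarith
  have h_zero : (0 : E) ∉ s.image fun c => (2 : ℝ) • c := by
    simp only [Finset.mem_image, not_exists, not_and]
    intro c hc h
    simpa [h] using h_norm hc
  -- The centre `0` is far from the sphere, so it can be added to the separated set `2 • s`.
  have h_card := Besicovitch.card_le_of_separated (insert 0 (s.image fun c => (2 : ℝ) • c))
    (by simpa only [Finset.forall_mem_insert, Finset.forall_mem_image, norm_zero] using
      ⟨zero_le_two, fun c hc => (h_norm hc).le⟩)
    (by
      simp only [Finset.forall_mem_insert, Finset.forall_mem_image, zero_sub, norm_neg, sub_zero]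
      refine ⟨⟨fun h => (h rfl).elim, fun c hc _ => by linarith [h_norm hc]⟩,
        fun c hc => ⟨fun _ => by linarith [h_norm hc], h_sep c hc⟩⟩)
  rw [Finset.card_insert_of_notMem h_zero,
    Finset.card_image_of_injective _ (smul_right_injective E two_ne_zero)] at h_card
  exact h_card

lemma encard_lt_five_pow_finrank_of_isSeparated {s : Set E} (hs : s ⊆ sphere 0 1)
    (hsep : IsSeparated (1 / 2 : NNReal) s) : s.encard < 5 ^ Module.finrank ℝ E := by
  by_contra! h
  obtain ⟨t, hts, ht⟩ := Set.exists_subset_encard_eq h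
  lift t to Finset E using
    Set.finite_of_encard_le_coe (k := 5 ^ Module.finrank ℝ E) (mod_cast ht.le)
  rw [Set.encard_coe_eq_coe_finsetCard] at ht
  exact (card_lt_five_pow_finrank_of_isSeparated (hts.trans hs) (hsep.subset hts)).ne
    (mod_cast ht)

lemma exists_finset_isCover_sphere (E : Type*) [NormedAddCommGroup E] [NormedSpace ℝ E]
    [FiniteDimensional ℝ E] :
    ∃ T : Finset E, (T : Set E) ⊆ sphere 0 1 ∧ IsCover (1 / 2) (sphere 0 1) (T : Set E) ∧
      T.card < 5 ^ Module.finrank ℝ E := by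
  have h_top : packingNumber (1 / 2) (sphere (0 : E) 1) ≠ ⊤ := by
    refine ne_top_of_le_ne_top (ENat.natCast_ne_top (5 ^ Module.finrank ℝ E)) ?_
    exact iSup_le fun C => iSup_le fun hC => iSup_le fun hsep =>
      mod_cast (encard_lt_five_pow_finrank_of_isSeparated hC hsep).le
  have h_card := encard_lt_five_pow_finrank_of_isSeparated
    (maximalSeparatedSet_subset (ε := 1 / 2) (A := sphere (0 : E) 1))
    isSeparated_maximalSeparatedSet
  have h_cover := isCover_maximalSeparatedSet h_top
  have h_subset := maximalSeparatedSet_subset (ε := 1 / 2) (A := sphere (0 : E) 1)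
  lift maximalSeparatedSet (1 / 2) (sphere (0 : E) 1) to Finset E using
    Set.finite_of_encard_le_coe (k := 5 ^ Module.finrank ℝ E) (mod_cast h_card.le) with T
  rw [Set.encard_coe_eq_coe_finsetCard] at h_card
  exact ⟨T, h_subset, h_cover, mod_cast h_card⟩

end SphereNet

section QuadraticForm

open Metric

variable {E : Type*} [NormedAddCommGroup E] [InnerProductSpace ℝ E] {A : E →L[ℝ] E}

lemma opNorm_le_of_forall_abs_inner_le (hA : A.IsSymmetric) {m : ℝ} (hm : 0 ≤ m)
    (h : ∀ x : E, ‖x‖ = 1 → |inner ℝ (A x) x| ≤ m) : ‖A‖ ≤ m := by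
  rw [A.norm_eq_iSup_rayleighQuotient hA]
  refine ciSup_le fun x => ?_
  rcases eq_or_ne x 0 with rfl | hx
  · simpa using hm
  have h_unit : ‖‖x‖⁻¹ • x‖ = 1 := norm_smul_inv_norm hx
  rw [← A.rayleigh_smul x (inv_ne_zero (norm_ne_zero_iff.mpr hx)),
    ContinuousLinearMap.rayleighQuotient, ContinuousLinearMap.reApplyInnerSelf_apply]
  simpa [h_unit] using h _ h_unit

lemma norm_sub_mul_norm_add_le {x y : E} (hx : ‖x‖ = 1) (hy : ‖y‖ = 1) {ε : ℝ}
    (hε : ε ^ 2 ≤ 2) (hxy : ‖x - y‖ ≤ ε) : ‖x - y‖ * ‖x + y‖ ≤ ε * √(4 - ε ^ 2) := by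
  have hε0 : 0 ≤ ε := (norm_nonneg _).trans hxy
  have h_sq : ‖x - y‖ ^ 2 ≤ ε ^ 2 := by gcongr
  have h_add : ‖x + y‖ ^ 2 = 4 - ‖x - y‖ ^ 2 := by
    have := parallelogram_law_with_norm ℝ x y
    rw [hx, hy] at this
    linarith
  refine le_of_sq_le_sq ?_ (by positivity)
  calc (‖x - y‖ * ‖x + y‖) ^ 2 = ‖x - y‖ ^ 2 * (4 - ‖x - y‖ ^ 2) := by rw [mul_pow, h_add]
    _ ≤ ε ^ 2 * (4 - ε ^ 2) := by
        nlinarith [mul_nonneg (sub_nonneg.mpr h_sq) (show 0 ≤ 4 - ε ^ 2 - ‖x - y‖ ^ 2 by linarith)]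
    _ = (ε * √(4 - ε ^ 2)) ^ 2 := by rw [mul_pow, Real.sq_sqrt (by linarith)]

lemma inner_apply_self_sub_inner_apply_self (hA : A.IsSymmetric) (x y : E) :
    inner ℝ (A x) x - inner ℝ (A y) y = inner ℝ (A (x - y)) (x + y) := by
  have : inner ℝ (A y) x = inner ℝ (A x) y := by
    rw [real_inner_comm]
    exact (hA x y).symm
  simp only [map_sub, inner_sub_left, inner_add_right]
  linarith

lemma opNorm_le_of_isCover_sphere (hA : A.IsSymmetric) {ε : NNReal} (hε : ε ^ 2 ≤ 2) {T : Set E}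
    (hT : T ⊆ sphere 0 1) (hcover : IsCover ε (sphere 0 1) T) {m : ℝ} (hm : 0 ≤ m)
    (h : ∀ y ∈ T, |inner ℝ (A y) y| ≤ m) : (1 - ε * √(4 - ε ^ 2)) * ‖A‖ ≤ m := by
  suffices ‖A‖ ≤ m + ‖A‖ * (ε * √(4 - ε ^ 2)) by linarith
  refine opNorm_le_of_forall_abs_inner_le hA (by positivity) fun x hx => ?_
  obtain ⟨y, hyT, hxy⟩ := hcover (mem_sphere_zero_iff_norm.mpr hx)
  have hy : ‖y‖ = 1 := mem_sphere_zero_iff_norm.mp (hT hyT)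
  have hxy : ‖x - y‖ ≤ ε := by
    rw [← dist_eq_norm, dist_le_coe, ← ENNReal.coe_le_coe, ← edist_nndist]
    exact hxy
  calc |inner ℝ (A x) x|
      = |inner ℝ (A y) y + inner ℝ (A (x - y)) (x + y)| := by
        rw [← inner_apply_self_sub_inner_apply_self hA, add_sub_cancel]
    _ ≤ |inner ℝ (A y) y| + |inner ℝ (A (x - y)) (x + y)| := abs_add_le _ _
    _ ≤ m + ‖A‖ * ‖x - y‖ * ‖x + y‖ := by
        gcongr
        · exact h y hyT
        · exact (abs_real_inner_le_norm _ _).trans (by gcongr; exact A.le_opNorm _)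
    _ ≤ m + ‖A‖ * (ε * √(4 - ε ^ 2)) := by
        rw [mul_assoc]
        have := norm_sub_mul_norm_add_le hx hy (mod_cast hε) hxy
        gcongr

lemma opNorm_le_mul_of_isCover_half_sphere (hA : A.IsSymmetric) {T : Set E}
    (hT : T ⊆ sphere 0 1) (hcover : IsCover (1 / 2) (sphere 0 1) T) {m : ℝ} (hm : 0 ≤ m)
    (h : ∀ y ∈ T, |inner ℝ (A y) y| ≤ m) : ‖A‖ ≤ 32 * m := by
  have h_cover := opNorm_le_of_isCover_sphere (ε := 1 / 2) hA
    (by rw [← NNReal.coe_le_coe]; norm_num) hT hcover hm h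
  have h_sqrt : √(4 - (1 / 2) ^ 2) ≤ 31 / 16 := Real.sqrt_le_iff.mpr (by norm_num)
  push_cast at h_cover
  nlinarith [norm_nonneg A]

end QuadraticForm

section CovarianceDeviation

variable {ι κ : Type*} [Fintype ι] [DecidableEq κ]

/-- The weighted sum of the deviations of the outer products of the vectors `B i` from `s • 1`.
If the `B i` are random with covariance `s • 1`, then this is the centred version of
`∑ i, a i • vecMulVec (B i) (B i)`. -/
def covDeviation (a : ι → ℝ) (s : ℝ) (B : ι → κ → ℝ) : Matrix κ κ ℝ :=
  ∑ i, a i • (vecMulVec (B i) (B i) - s • 1)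

lemma sum_smul_vecMulVec_sub_smul_one (a : ι → ℝ) (s : ℝ) (B : ι → κ → ℝ) :
    ∑ i, a i • vecMulVec (B i) (B i) - s • 1
      = covDeviation a s B + ((∑ i, a i - 1) * s) • 1 := by
  simp only [covDeviation, smul_sub, Finset.sum_sub_distrib, smul_smul, ← Finset.sum_smul, sub_mul,
    one_mul, sub_smul, Finset.sum_mul]
  abel

lemma isHermitian_covDeviation (a : ι → ℝ) (s : ℝ) (B : ι → κ → ℝ) :
    (covDeviation a s B).IsHermitian := by
  ext i j
  simp [covDeviation, Matrix.sum_apply, vecMulVec_apply, one_apply, mul_comm, eq_comm]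

variable [Fintype κ]

lemma inner_toEuclideanLin_vecMulVec_self (b : κ → ℝ) (x : EuclideanSpace ℝ κ) :
    inner ℝ (toEuclideanLin (vecMulVec b b) x) x = (x ⬝ᵥ b) ^ 2 := by
  simp [toLpLin_apply, vecMulVec_mulVec, EuclideanSpace.inner_eq_star_dotProduct, sq,
    dotProduct_comm b]

lemma inner_toEuclideanLin_covDeviation (a : ι → ℝ) (s : ℝ) (B : ι → κ → ℝ)
    (x : EuclideanSpace ℝ κ) :
    inner ℝ (toEuclideanLin (covDeviation a s B) x) x
      = ∑ i, a i * ((x ⬝ᵥ B i) ^ 2 - s * ‖x‖ ^ 2) := by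
  simp only [covDeviation, map_sum, map_smul, map_sub, LinearMap.sum_apply, LinearMap.smul_apply,
    LinearMap.sub_apply, sum_inner, real_inner_smul_left, inner_sub_left,
    inner_toEuclideanLin_vecMulVec_self, toLpLin_one, LinearMap.id_apply,
    real_inner_self_eq_norm_sq]

end CovarianceDeviation

section SpectralNorm

lemma specNorm_add_le {m k : ℕ} (M M' : Matrix (Fin m) (Fin k) ℝ) :
    specNorm (M + M') ≤ specNorm M + specNorm M' := by
  simp only [specNorm, map_add]
  exact norm_add_le _ _

lemma specNorm_smul_one_le {k : ℕ} (r : ℝ) :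
    specNorm (r • (1 : Matrix (Fin k) (Fin k) ℝ)) ≤ |r| := by
  refine ContinuousLinearMap.opNorm_le_bound _ (abs_nonneg r) fun x => ?_
  simp [toLpLin_one, norm_smul]

lemma specNorm_sum_smul_vecMulVec_sub_smul_one_le {N k : ℕ} (a : Fin N → ℝ) (s : ℝ)
    (B : Fin N → Fin k → ℝ) :
    specNorm (∑ i, a i • vecMulVec (B i) (B i) - s • 1)
      ≤ specNorm (covDeviation a s B) + |(∑ i, a i - 1) * s| := by
  rw [sum_smul_vecMulVec_sub_smul_one]
  exact (specNorm_add_le _ _).trans (add_le_add_right (specNorm_smul_one_le _) _)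

end SpectralNorm

section Concentration

lemma ofReal_one_sub_le_measure {Ω : Type*} {mΩ : MeasurableSpace Ω} {μ : Measure Ω}
    [IsProbabilityMeasure μ] {s : Set Ω} {δ : ℝ} (h : μ.real sᶜ ≤ δ) :
    ENNReal.ofReal (1 - δ) ≤ μ s := by
  refine ENNReal.ofReal_le_of_le_toReal ?_
  have h_union := measureReal_union_le (μ := μ) s sᶜ
  rw [Set.union_compl_self, probReal_univ] at h_union
  exact (by linarith : 1 - δ ≤ μ.real s)

variable {N k : ℕ} {w : NNReal} {a : Fin N → ℝ} {b t : ℝ}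

lemma hasSubexponentialMGF_inner_covDeviation (hw : w ≠ 0) (hab : ∀ i, |a i| ≤ b)
    {x : EuclideanSpace ℝ (Fin k)} (hx : ‖x‖ = 1) :
    HasSubexponentialMGF (fun B => inner ℝ (toEuclideanLin (covDeviation a w B) x) x)
      (8 * w ^ 2 * ∑ i, a i ^ 2) (4 * w * b) (iidGaussVec N k w) := by
  have h_meas : Measurable fun b : Fin k → ℝ => x ⬝ᵥ b := by
    unfold dotProduct
    fun_prop
  have h_map (i : Fin N) : (iidGaussVec N k w).map (fun B => x ⬝ᵥ B i) = gaussianReal 0 w := by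
    rw [← gaussVec_map_dotProduct hx,
      ← (measurePreserving_eval (fun _ : Fin N => gaussVec k w) i).map_eq,
      Measure.map_map h_meas (measurable_pi_apply i)]
    rfl
  have h_summand (i : Fin N) : HasSubexponentialMGF (fun B => a i * ((x ⬝ᵥ B i) ^ 2 - w))
      (a i ^ 2 * (8 * w ^ 2)) (4 * w * b) (iidGaussVec N k w) := by
    have h_sq := hasSubexponentialMGF_sq_sub_gaussianReal hw
    rw [← h_map i] at h_sq
    refine ((h_sq.of_map (h_meas.comp (measurable_pi_apply i)).aemeasurable).const_mul
      (a i)).mono_scale ?_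
    rw [mul_comm]
    exact mul_le_mul_of_nonneg_left (hab i) (by positivity)
  have h_indep : iIndepFun (fun i B => a i * ((x ⬝ᵥ B i) ^ 2 - w)) (iidGaussVec N k w) :=
    iIndepFun_pi (X := fun i b => a i * ((x ⬝ᵥ b) ^ 2 - (w : ℝ))) fun i => by fun_prop
  have h_sum := HasSubexponentialMGF.sum_of_iIndepFun h_indep (fun i => by fun_prop) h_summand
  convert h_sum using 1
  · ext B
    simp [inner_toEuclideanLin_covDeviation, hx]
  · rw [← Finset.sum_mul, mul_comm]

lemma measureReal_lt_abs_inner_covDeviation_le (hw : w ≠ 0) (hab : ∀ i, |a i| ≤ b) (hb : 0 ≤ b)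
    (ht : 0 < t) {x : EuclideanSpace ℝ (Fin k)} (hx : ‖x‖ = 1) :
    (iidGaussVec N k w).real {B | 4 * w * (√((∑ i, a i ^ 2) * t) + b * t)
        < |inner ℝ (toEuclideanLin (covDeviation a w B) x) x|} ≤ 2 * Real.exp (-t) := by
  rcases hb.eq_or_lt with rfl | hb
  · have ha (i : Fin N) : a i = 0 := abs_nonpos_iff.mp (hab i)
    simp [inner_toEuclideanLin_covDeviation, ha, Real.exp_nonneg]
  have h_threshold : 4 * w * (√((∑ i, a i ^ 2) * t) + b * t)
      = √(2 * (8 * w ^ 2 * ∑ i, a i ^ 2) * t) + 4 * w * b * t := by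
    rw [show 2 * (8 * w ^ 2 * ∑ i, a i ^ 2) * t = (4 * w) ^ 2 * ((∑ i, a i ^ 2) * t) by ring,
      Real.sqrt_mul (sq_nonneg (4 * w : ℝ)), Real.sqrt_sq (by positivity)]
    ring
  rw [h_threshold]
  refine le_trans (measureReal_mono fun B hB => ?_)
    ((hasSubexponentialMGF_inner_covDeviation hw hab hx).measureReal_abs_ge_le
      (by positivity) (by positivity) ht)
  exact (Set.mem_ofPred_eq ▸ hB : _ < _).le

lemma measureReal_lt_specNorm_covDeviation_le (hw : w ≠ 0) (hab : ∀ i, |a i| ≤ b) (hb : 0 ≤ b)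
    (ht : 0 < t) :
    (iidGaussVec N k w).real {B | 128 * w * (√((∑ i, a i ^ 2) * t) + b * t)
        < specNorm (covDeviation a w B)} ≤ (5 ^ k - 1) * (2 * Real.exp (-t)) := by
  obtain ⟨T, hT, h_cover, h_card⟩ := exists_finset_isCover_sphere (EuclideanSpace ℝ (Fin k))
  rw [finrank_euclideanSpace_fin, ← Nat.add_one_le_iff] at h_card
  set r := 4 * w * (√((∑ i, a i ^ 2) * t) + b * t) with hr
  rw [show 128 * w * (√((∑ i, a i ^ 2) * t) + b * t) = 32 * r by rw [hr]; ring]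
  calc (iidGaussVec N k w).real {B | 32 * r < specNorm (covDeviation a w B)}
      ≤ (iidGaussVec N k w).real
          (⋃ x ∈ T, {B | r < |inner ℝ (toEuclideanLin (covDeviation a w B) x) x|}) := by
        refine measureReal_mono (fun B => ?_) (measure_ne_top _ _)
        contrapose!
        intro hB
        simp only [Set.mem_iUnion, Set.mem_ofPred_eq, not_exists, not_lt] at hB ⊢
        exact opNorm_le_mul_of_isCover_half_sphere
          (isSymmetric_toEuclideanLin_iff.mpr (isHermitian_covDeviation a w B)) hT h_cover
          (by positivity) hB
    _ ≤ ∑ x ∈ T, (iidGaussVec N k w).real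
          {B | r < |inner ℝ (toEuclideanLin (covDeviation a w B) x) x|} :=
        measureReal_biUnion_finset_le _ _
    _ ≤ T.card • (2 * Real.exp (-t)) := Finset.sum_le_card_nsmul _ _ _ fun x hx =>
        measureReal_lt_abs_inner_covDeviation_le hw hab hb ht (mem_sphere_zero_iff_norm.mp (hT hx))
    _ ≤ (5 ^ k - 1) * (2 * Real.exp (-t)) := by
        rw [nsmul_eq_mul]
        gcongr
        rw [le_sub_iff_add_le]
        exact_mod_cast h_card

lemma one_sub_le_measure_specNorm_le (hw : w ≠ 0) (hab : ∀ i, |a i| ≤ b) (hb : 0 ≤ b)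
    (ht : 0 < t) :
    ENNReal.ofReal (1 - (5 ^ k - 1) * (2 * Real.exp (-t))) ≤ iidGaussVec N k w
      {B | specNorm (∑ i, a i • vecMulVec (B i) (B i) - (w : ℝ) • 1)
        ≤ 128 * w * (√((∑ i, a i ^ 2) * t) + b * t) + |(∑ i, a i - 1) * w|} := by
  refine ofReal_one_sub_le_measure <| (measureReal_mono (fun B => ?_) (measure_ne_top _ _)).trans <|
    measureReal_lt_specNorm_covDeviation_le hw hab hb ht
  contrapose!
  simp only [Set.mem_compl_iff, Set.mem_ofPred_eq, not_lt, not_not]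
  exact fun hB => (specNorm_sum_smul_vecMulVec_sub_smul_one_le a w B).trans (by gcongr)

end Concentration

section VectorNorms

variable {k : ℕ} (v : Fin k → ℝ)

lemma eucNorm_sq : eucNorm v ^ 2 = ∑ i, v i ^ 2 := Real.sq_sqrt (by positivity)

lemma lpNorm_four_sq : _root_.lpNorm 4 v ^ 2 = √(∑ i, (v i ^ 2) ^ 2) := by
  have h_four (i : Fin k) : |v i| ^ (4 : ℝ) = (v i ^ 2) ^ 2 := by
    rw [← sq_abs (v i), ← pow_mul]
    norm_cast
  simp only [_root_.lpNorm, h_four]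
  rw [← Real.rpow_natCast, ← Real.rpow_mul (by positivity), Real.sqrt_eq_rpow]
  norm_num

lemma supNorm_nonneg : 0 ≤ supNorm v := Real.iSup_nonneg fun _ => abs_nonneg _

lemma abs_le_supNorm (i : Fin k) : |v i| ≤ supNorm v :=
  le_ciSup (f := fun i => |v i|) (Set.finite_range _).bddAbove i

end VectorNorms

lemma five_pow_sub_one_mul_exp_neg_log_le {n : ℕ} {x δ : ℝ} (hx : 2 ≤ n → 2 ≤ x) (hδ0 : 0 < δ)
    (hδ1 : δ < 1) :
    (5 ^ (n - 1) - 1) * (2 * Real.exp (-(4 * (n * Real.log (x / δ))))) ≤ δ := by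
  rcases lt_or_ge n 2 with hn | hn
  · simpa [Nat.sub_eq_zero_of_le (Nat.lt_succ_iff.mp hn)] using hδ0.le
  have hx2 := hx hn
  have hx0 : 0 < x := two_pos.trans_le hx2
  have h_exp : Real.exp (-(4 * (n * Real.log (x / δ)))) = δ ^ (4 * n) / x ^ (4 * n) := by
    rw [← div_pow, ← Real.exp_log (div_pos hδ0 hx0), ← Real.exp_nat_mul, ← inv_div x δ,
      Real.log_inv]
    push_cast
    ring_nf
  have h_pow : 2 * ((5 : ℝ) ^ (n - 1) - 1) ≤ x ^ (4 * n) :=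
    calc 2 * ((5 : ℝ) ^ (n - 1) - 1) ≤ 5 * 5 ^ (n - 1) := by
          linarith [show (0 : ℝ) ≤ 5 ^ (n - 1) by positivity]
      _ = 5 ^ n := mul_pow_sub_one (by lia) 5
      _ ≤ (2 ^ 4) ^ n := by gcongr; norm_num
      _ ≤ x ^ (4 * n) := by rw [← pow_mul]; gcongr
  calc (5 ^ (n - 1) - 1) * (2 * Real.exp (-(4 * (n * Real.log (x / δ)))))
      = 2 * (5 ^ (n - 1) - 1) / x ^ (4 * n) * δ ^ (4 * n) := by rw [h_exp]; ring
    _ ≤ 1 * δ := by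
        gcongr
        · exact (div_le_one (by positivity)).mpr h_pow
        · exact pow_le_of_le_one hδ0.le hδ1.le (by lia)
    _ = δ := one_mul δ

theorem stmt_4_general {N n : ℕ} (v : Fin N → ℝ) {δ : ℝ} (hN : 1 ≤ N) (hn : 1 ≤ n)
    (hnN : 2 ≤ n → 2 ≤ N) (hδ0 : 0 < δ) (hδ1 : δ < 1) :
    ENNReal.ofReal (1 - δ) ≤
      (iidGaussVec N (n - 1) (N : NNReal)⁻¹)
        {B | specNorm
            ((∑ i, (v i) ^ 2 • vecMulVec (B i) (B i))
              - ((1 : ℝ) / N) • (1 : Matrix (Fin (n - 1)) (Fin (n - 1)) ℝ))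
          ≤ 512 * (√(n * Real.log (N / δ)) / N * _root_.lpNorm 4 v ^ 2
                + n * Real.log (N / δ) / N * supNorm v ^ 2)
            + |eucNorm v ^ 2 - 1| / N} := by
  set L := Real.log (N / δ)
  have hL : 0 < L := Real.log_pos <| (one_lt_div hδ0).mpr (hδ1.trans_le (mod_cast hN))
  have h_abs_le (i : Fin N) : |v i ^ 2| ≤ supNorm v ^ 2 := by
    rw [abs_pow]
    gcongr
    exact abs_le_supNorm v i
  have h_tail : (5 ^ (n - 1) - 1) * (2 * Real.exp (-(4 * (n * L)))) ≤ δ :=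
    five_pow_sub_one_mul_exp_neg_log_le (mod_cast hnN) hδ0 hδ1
  have h_sqrt : √((∑ i, (v i ^ 2) ^ 2) * (4 * (n * L)))
      = 2 * √(n * L) * _root_.lpNorm 4 v ^ 2 := by
    rw [mul_comm, lpNorm_four_sq, Real.sqrt_mul (by positivity), Real.sqrt_mul zero_le_four,
      show (4 : ℝ) = 2 ^ 2 by norm_num, Real.sqrt_sq zero_le_two]
  refine (ENNReal.ofReal_le_ofReal (sub_le_sub_left h_tail 1)).trans
    ((one_sub_le_measure_specNorm_le (w := (N : NNReal)⁻¹) (inv_ne_zero (by positivity)) h_abs_le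
      (sq_nonneg _) (by positivity)).trans (measure_mono fun B hB => ?_))
  simp only [Set.mem_ofPred_eq, NNReal.coe_inv, NNReal.coe_natCast, one_div] at hB ⊢
  refine hB.trans (add_le_add ?_ ?_)
  · calc 128 * (N : ℝ)⁻¹ * (√((∑ i, (v i ^ 2) ^ 2) * (4 * (n * L)))
          + supNorm v ^ 2 * (4 * (n * L)))
        = 256 * (√(n * L) / N * _root_.lpNorm 4 v ^ 2) + 512 * (n * L / N * supNorm v ^ 2) := by
          rw [h_sqrt]
          ring
      _ ≤ 512 * (√(n * L) / N * _root_.lpNorm 4 v ^ 2 + n * L / N * supNorm v ^ 2) := by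
          rw [mul_add]
          gcongr
          norm_num
  · rw [eucNorm_sq, abs_mul, abs_inv, Nat.abs_cast, div_eq_mul_inv]

/-- with `b_1, …, b_N` i.i.d. `N(0, (1/N) I_{n-1})` and `v ∈ ℝ^N` fixed, there
is a universal constant `C > 0` such that for any `δ ∈ (0,1)`, with probability at least
`1 - δ`, `‖∑_i v_i² b_i b_iᵀ - (1/N) I_{n-1}‖ ≤ C (√(n log(N/δ))/N ‖v‖₄²
  + (n log(N/δ) + log²(N/δ))/N ‖v‖_∞²) + |‖v‖² - 1|/N` in spectral norm. -/
theorem stmt_4 :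
    ∃ C : ℝ, 0 < C ∧
      ∀ (N n : ℕ) (v : Fin N → ℝ) (δ : ℝ), 1 ≤ n → n ≤ N → 0 < δ → δ < 1 →
        ENNReal.ofReal (1 - δ) ≤
          (iidGaussVec N (n - 1) ((N : NNReal))⁻¹)
            {B | specNorm
                ((∑ i, (v i) ^ 2 • Matrix.vecMulVec (B i) (B i))
                  - ((1 : ℝ) / N) • (1 : Matrix (Fin (n - 1)) (Fin (n - 1)) ℝ))
              ≤ C * (Real.sqrt (n * Real.log (N / δ)) / N * lpNorm 4 v ^ 2
                    + (n * Real.log (N / δ) + (Real.log (N / δ)) ^ 2) / N * supNorm v ^ 2)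
                + |eucNorm v ^ 2 - 1| / N} := by
  refine ⟨512, by norm_num, fun N n v δ hn hnN hδ0 hδ1 =>
    (stmt_4_general v (hn.trans hnN) hn (fun h => h.trans hnN) hδ0 hδ1).trans
      (measure_mono (Set.ofPred_subset_ofPred.mpr fun B hB => hB.trans ?_))⟩
  gcongr
  exact le_add_of_nonneg_right (sq_nonneg _)
end

section
/- Let b_1,…,b_N be i.i.d. N(0, (1/N) I_{n−1}) Gaussian vectors. There is a universal constant C > 0 such that for any δ ∈ (0,1), with probability at least 1−δ, ‖Σ_{i=1}^N (‖b_i‖² − (n−1)/N) b_i b_iᵀ − (2/N) I_{n−1}‖ ≤ C( n·√(log(N/δ))/N^{3/2} + ((n·log(N/δ))^{3/2} + log³(N/δ))/N² ), where ‖·‖ on matrices denotes the spectral norm. -/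
open MeasureTheory ProbabilityTheory Matrix

/-!
Rescaling by `√N` reduces the claim to standard Gaussian vectors `g i` in dimension `d = n - 1` and
the matrix `D = ∑ i, ((‖g i‖² - d) • g i (g i)ᵀ - 2 • 1)`. For a fixed unit vector `x`, rotation
invariance gives `(‖g i‖² - d) * ⟪x, g i⟫²` mean `2`. These variables have only stretched
exponential tails, so `‖g i‖² - d`, which has exponential moments at scale `a = 8 √d`, is truncated
at the level `K = 4 a log (N / δ)`: with high probability no term is changed, and the bias is of
order `a exp (-K / (4 a)) = a δ / N`. The truncated summands satisfy a Bernstein-type Chernoff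
bound, and a union bound over a `1/2`-net of the sphere with at most `5 ^ d` points controls the
norm of the symmetric matrix `D`.
-/

section StandardGaussian

lemma integrable_gaussianReal_zero_one_iff {f : ℝ → ℝ} :
    Integrable f (gaussianReal 0 1) ↔ Integrable fun x => f x * Real.exp (-(1 / 2) * x ^ 2) := by
  have hc : (√(2 * Real.pi))⁻¹ ≠ 0 := by positivity
  have hdensity (x : ℝ) : f x * (gaussianPDF 0 1 x).toReal
      = (√(2 * Real.pi))⁻¹ * (f x * Real.exp (-(1 / 2) * x ^ 2)) := by
    rw [toReal_gaussianPDF, gaussianPDFReal, NNReal.coe_one, mul_one, mul_one, sub_zero,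
      show -x ^ 2 / 2 = -(1 / 2) * x ^ 2 by ring]
    ring
  rw [gaussianReal_of_var_ne_zero _ one_ne_zero, integrable_withDensity_iff (by fun_prop)
    (.of_forall fun x => gaussianPDF_lt_top)]
  simp_rw [hdensity]
  exact integrable_const_mul_iff hc.isUnit _

lemma integral_gaussianReal_zero_one (f : ℝ → ℝ) :
    ∫ x, f x ∂(gaussianReal 0 1)
      = (√(2 * Real.pi))⁻¹ * ∫ x, f x * Real.exp (-(1 / 2) * x ^ 2) := by
  rw [integral_gaussianReal_eq_integral_smul one_ne_zero, ← integral_const_mul]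
  congr with x
  rw [gaussianPDFReal, NNReal.coe_one, mul_one, mul_one, sub_zero, smul_eq_mul,
    show -x ^ 2 / 2 = -(1 / 2) * x ^ 2 by ring]
  ring

lemma integrable_pow_gaussianReal (m : ℝ) (v : NNReal) (n : ℕ) :
    Integrable (fun x => x ^ n) (gaussianReal m v) := by
  refine (integrable_norm_iff (by fun_prop)).1 ?_
  simpa using (memLp_id_gaussianReal (μ := m) (v := v) n).integrable_norm_pow'

lemma integral_pow_add_two_gaussianReal (n : ℕ) :
    ∫ x, x ^ (n + 2) ∂(gaussianReal 0 1) = (n + 1) * ∫ x, x ^ n ∂(gaussianReal 0 1) := by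
  have hint (k : ℕ) := integrable_gaussianReal_zero_one_iff.1 (integrable_pow_gaussianReal 0 1 k)
  have hderiv (x : ℝ) : HasDerivAt (fun x => Real.exp (-(1 / 2) * x ^ 2))
      (-x * Real.exp (-(1 / 2) * x ^ 2)) x := by
    convert! ((hasDerivAt_pow 2 x).const_mul (-(1 / 2) : ℝ)).exp using 1
    push_cast
    ring
  have hparts := integral_mul_deriv_eq_deriv_mul_of_integrable
    (u := fun x : ℝ => x ^ (n + 1)) (u' := fun x => ↑(n + 1) * x ^ n)
    (fun x _ => by simpa using hasDerivAt_pow (n + 1) x) (fun x _ => hderiv x)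
    ((hint (n + 2)).neg.congr (.of_forall fun x => by simp only [Pi.neg_apply, Pi.mul_apply]; ring))
    (((hint n).const_mul (n + 1)).congr
      (.of_forall fun x => by simp only [Pi.mul_apply]; push_cast; ring)) (hint (n + 1))
  have hleft (x : ℝ) : x ^ (n + 1) * (-x * Real.exp (-(1 / 2) * x ^ 2))
      = -(x ^ (n + 2) * Real.exp (-(1 / 2) * x ^ 2)) := by ring
  simp_rw [hleft, mul_assoc, integral_neg, integral_const_mul, neg_inj] at hparts
  rw [integral_gaussianReal_zero_one, integral_gaussianReal_zero_one, hparts]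
  push_cast
  ring

lemma integral_sq_gaussianReal : ∫ x, x ^ 2 ∂(gaussianReal 0 1) = 1 := by
  simpa using integral_pow_add_two_gaussianReal 0

lemma integral_pow_four_gaussianReal : ∫ x, x ^ 4 ∂(gaussianReal 0 1) = 3 := by
  rw [integral_pow_add_two_gaussianReal 2, integral_sq_gaussianReal]
  norm_num

lemma integrable_exp_mul_sq_gaussianReal_s5 {c : ℝ} (hc : c < 1 / 2) :
    Integrable (fun x => Real.exp (c * x ^ 2)) (gaussianReal 0 1) := by
  rw [integrable_gaussianReal_zero_one_iff]
  refine (integrable_exp_neg_mul_sq (b := 1 / 2 - c) (by linarith)).congr (.of_forall fun x => ?_)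
  beta_reduce
  rw [← Real.exp_add]
  ring_nf

lemma integral_exp_mul_sq_gaussianReal {c : ℝ} (hc : c < 1 / 2) :
    ∫ x, Real.exp (c * x ^ 2) ∂(gaussianReal 0 1) = (√(1 - 2 * c))⁻¹ := by
  have hexp (x : ℝ) : Real.exp (c * x ^ 2) * Real.exp (-(1 / 2) * x ^ 2)
      = Real.exp (-(1 / 2 - c) * x ^ 2) := by
    rw [← Real.exp_add]
    ring_nf
  have hc₁ : 1 - 2 * c ≠ 0 := by linarith
  have : 1 / 2 - c ≠ 0 := by linarith
  simp_rw [integral_gaussianReal_zero_one, hexp, integral_gaussian]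
  rw [← Real.sqrt_inv, ← Real.sqrt_inv, ← Real.sqrt_mul (by positivity)]
  congr 1
  field_simp

end StandardGaussian

/-- `X` has exponential moment at most `M` under `μ`. Integrability of `exp ∘ X` is part of the
notion, since otherwise its Bochner integral would be the junk value `0`. -/
structure ExpMomentLE {Ω : Type*} [MeasurableSpace Ω] (X : Ω → ℝ) (M : ℝ) (μ : Measure Ω) :
    Prop where
  integrable : Integrable (fun ω => Real.exp (X ω)) μ
  integral_le : ∫ ω, Real.exp (X ω) ∂μ ≤ M

namespace ExpMomentLE

variable {Ω ι : Type*} [MeasurableSpace Ω] [Fintype ι] {μ : Measure Ω} {X Y : Ω → ℝ}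
  {M M' : ℝ}

lemma aemeasurable (h : ExpMomentLE X M μ) : AEMeasurable X μ :=
  Real.aemeasurable_of_aemeasurable_exp h.integrable.aemeasurable

lemma mono (h : ExpMomentLE X M μ) (hM : M ≤ M') : ExpMomentLE X M' μ :=
  ⟨h.integrable, h.integral_le.trans hM⟩

lemma add_const (h : ExpMomentLE X M μ) (b : ℝ) :
    ExpMomentLE (fun ω => X ω + b) (M * Real.exp b) μ := by
  constructor
  · simpa only [Real.exp_add] using h.integrable.mul_const _
  · simp_rw [Real.exp_add, integral_mul_const]
    gcongr
    exact h.integral_le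

lemma integrable_const_mul_add (hX : ExpMomentLE X M μ) (hY : ExpMomentLE Y M' μ) (α β : ℝ) :
    Integrable (fun ω => α * Real.exp (X ω) + β * Real.exp (Y ω)) μ :=
  (hX.integrable.const_mul α).add (hY.integrable.const_mul β)

lemma integral_const_mul_add_le (hX : ExpMomentLE X M μ) (hY : ExpMomentLE Y M' μ) {α β : ℝ}
    (hα : 0 ≤ α) (hβ : 0 ≤ β) :
    ∫ ω, (α * Real.exp (X ω) + β * Real.exp (Y ω)) ∂μ ≤ α * M + β * M' := by
  rw [integral_add (hX.integrable.const_mul α) (hY.integrable.const_mul β), integral_const_mul,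
    integral_const_mul]
  gcongr
  exacts [hX.integral_le, hY.integral_le]

lemma abs (hpos : ExpMomentLE X M μ) (hneg : ExpMomentLE (fun ω => -X ω) M' μ) :
    ExpMomentLE (fun ω => |X ω|) (M + M') μ := by
  have hle (ω : Ω) : Real.exp |X ω| ≤ Real.exp (X ω) + Real.exp (-X ω) :=
    Real.exp_abs_le (X ω)
  have hsum := hpos.integrable.add hneg.integrable
  have hint : Integrable (fun ω => Real.exp |X ω|) μ := by
    refine hsum.mono' (Real.measurable_exp.comp_aemeasurable
      hpos.aemeasurable.abs).aestronglyMeasurable (.of_forall fun ω => ?_)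
    rw [Real.norm_of_nonneg (Real.exp_nonneg _)]
    exact hle ω
  refine ⟨hint, (integral_mono hint hsum hle).trans ?_⟩
  exact (integral_add hpos.integrable hneg.integrable).trans_le
    (add_le_add hpos.integral_le hneg.integral_le)

lemma sum_pi [SigmaFinite μ] (h : ExpMomentLE X M μ) :
    ExpMomentLE (fun ω : ι → Ω => ∑ i, X (ω i)) (M ^ Fintype.card ι) (Measure.pi fun _ => μ) := by
  constructor
  · simp_rw [Real.exp_sum]
    exact Integrable.fintype_prod (f := fun _ ω => Real.exp (X ω)) fun _ => h.integrable
  · simp_rw [Real.exp_sum]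
    rw [integral_fintype_prod_eq_pow fun ω => Real.exp (X ω)]
    gcongr
    exact h.integral_le

lemma measureReal_ge_le (h : ExpMomentLE X M μ) (t : ℝ) :
    μ.real {ω | t ≤ X ω} ≤ M * Real.exp (-t) := by
  have hmarkov := mul_meas_ge_le_integral_of_nonneg (.of_forall fun ω => Real.exp_nonneg (X ω))
    h.integrable (Real.exp t)
  simp only [Real.exp_le_exp] at hmarkov
  rw [Real.exp_neg, ← div_eq_mul_inv, le_div_iff₀' (Real.exp_pos _)]
  exact hmarkov.trans h.integral_le

lemma measureReal_abs_sum_ge_le [IsFiniteMeasure μ] {c : ℝ} (hc : 0 ≤ c)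
    (hpos : ExpMomentLE (fun ω => c * X ω) M μ) (hneg : ExpMomentLE (fun ω => -c * X ω) M μ)
    (t : ℝ) :
    (Measure.pi fun _ : ι => μ).real {ω | t ≤ |∑ i, X (ω i)|}
      ≤ 2 * M ^ Fintype.card ι * Real.exp (-(c * t)) := by
  have hsum := (hpos.sum_pi (ι := ι)).abs (M' := M ^ Fintype.card ι) <| by
    simpa only [neg_mul, Finset.sum_neg_distrib] using hneg.sum_pi (ι := ι)
  rw [two_mul]
  refine (measureReal_mono fun ω hω => ?_).trans (hsum.measureReal_ge_le (c * t))
  rw [Set.mem_ofPred_eq] at hω ⊢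
  rw [← Finset.mul_sum, abs_mul, abs_of_nonneg hc]
  gcongr

end ExpMomentLE

/-- `‖g‖² - d` for the Euclidean norm of `g ∈ ℝᵈ`: a centered chi-square variable when `g` is
standard Gaussian. -/
def centeredNormSq {d : ℕ} (g : Fin d → ℝ) : ℝ := ∑ l, g l ^ 2 - d

@[fun_prop]
lemma measurable_centeredNormSq {d : ℕ} : Measurable (centeredNormSq (d := d)) := by
  unfold centeredNormSq
  fun_prop

lemma exp_neg_mul_inv_sqrt_le {c : ℝ} (hc : c ≤ 1 / 8) :
    Real.exp (-c) * (√(1 - 2 * c))⁻¹ ≤ Real.exp (2 * c ^ 2) := by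
  have hpos : 0 < 1 - 2 * c := by linarith
  suffices h : 1 ≤ Real.exp (2 * c + 4 * c ^ 2) * (1 - 2 * c) by
    rw [mul_inv_le_iff₀ (Real.sqrt_pos.2 hpos), ← div_le_iff₀' (Real.exp_pos _), ← Real.exp_sub]
    apply Real.le_sqrt_of_sq_le
    rw [← Real.exp_nat_mul, show ((2 : ℕ) : ℝ) * (-c - 2 * c ^ 2) = -(2 * c + 4 * c ^ 2) by
      push_cast; ring, Real.exp_neg]
    exact inv_le_of_inv_le₀ hpos ((inv_le_iff_one_le_mul₀ hpos).2 h)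
  rcases le_or_gt c 0 with hneg | hc0
  · calc 1 ≤ (2 * c + 4 * c ^ 2 + 1) * (1 - 2 * c) := by
          nlinarith [mul_nonneg (neg_nonneg.2 hneg) (sq_nonneg c)]
      _ ≤ _ := by gcongr; exact Real.add_one_le_exp _
  · calc 1 ≤ (1 + (2 * c + 4 * c ^ 2) + (2 * c + 4 * c ^ 2) ^ 2 / 2) * (1 - 2 * c) := by
          nlinarith [pow_pos hc0 2, pow_pos hc0 3, pow_pos hc0 4, pow_pos hc0 5]
      _ ≤ _ := by gcongr; exact Real.quadratic_le_exp_of_nonneg (by positivity)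

lemma expMomentLE_mul_centeredNormSq {d : ℕ} {c : ℝ} (hc : c ≤ 1 / 8) :
    ExpMomentLE (fun g => c * centeredNormSq g) (Real.exp (2 * c ^ 2) ^ d) (gaussVec d 1) := by
  have hc' : c < 1 / 2 := by linarith
  have hexp (x : ℝ) : Real.exp (c * (x ^ 2 - 1)) = Real.exp (-c) * Real.exp (c * x ^ 2) := by
    rw [← Real.exp_add]
    ring_nf
  have hcoord : ExpMomentLE (fun x => c * (x ^ 2 - 1)) (Real.exp (2 * c ^ 2))
      (gaussianReal 0 1) := by
    constructor
    · simpa only [hexp] using (integrable_exp_mul_sq_gaussianReal_s5 hc').const_mul _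
    · simpa only [hexp, integral_const_mul, integral_exp_mul_sq_gaussianReal hc'] using
        exp_neg_mul_inv_sqrt_le hc
  convert! hcoord.sum_pi (ι := Fin d) using 1
  · funext g
    simp [centeredNormSq, ← Finset.mul_sum]
  · rw [Fintype.card_fin]

lemma expMomentLE_abs_centeredNormSq {d : ℕ} (hd : 1 ≤ d) :
    ExpMomentLE (fun g => |centeredNormSq g| / (8 * √d)) 3 (gaussVec d 1) := by
  have hd₁ : (1 : ℝ) ≤ d := by exact_mod_cast hd
  have hsqrt : 1 ≤ √(d : ℝ) := Real.one_le_sqrt.2 hd₁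
  set c : ℝ := (8 * √d)⁻¹ with hcdef
  have hc0 : 0 ≤ c := by positivity
  have hc : c ≤ 1 / 8 := by
    rw [hcdef, one_div]
    gcongr
    linarith
  have hbound : Real.exp (2 * c ^ 2) ^ d ≤ 3 / 2 := by
    have hcd : d * (2 * c ^ 2) = 1 / 32 := by
      rw [hcdef, inv_pow, mul_pow, Real.sq_sqrt (by positivity)]
      field_simp
      norm_num
    have := Real.exp_bound_div_one_sub_of_interval (x := 1 / 32) (by norm_num) (by norm_num)
    rw [← Real.exp_nat_mul, hcd]
    norm_num at this ⊢
    linarith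
  have hpos := (expMomentLE_mul_centeredNormSq hc).mono hbound
  have hneg : ExpMomentLE (fun g => -(c * centeredNormSq g)) (3 / 2) (gaussVec d 1) := by
    simpa only [neg_mul] using
      (expMomentLE_mul_centeredNormSq (d := d) (c := -c) (by linarith)).mono (by rwa [neg_sq])
  convert! hpos.abs hneg using 2 with g
  · rw [abs_mul, abs_of_nonneg hc0, hcdef, inv_mul_eq_div]
  · norm_num

section RotationInvariance

variable {d : ℕ}

lemma integrable_pow_eval_gaussVec (n : ℕ) (i : Fin d) :
    Integrable (fun g => g i ^ n) (gaussVec d 1) :=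
  integrable_comp_eval (μ := fun _ => gaussianReal 0 1) (f := (· ^ n))
    (integrable_pow_gaussianReal 0 1 n)

lemma integral_pow_eval_gaussVec (n : ℕ) (i : Fin d) :
    ∫ g, g i ^ n ∂(gaussVec d 1) = ∫ y, y ^ n ∂(gaussianReal 0 1) :=
  integral_comp_eval (μ := fun _ => gaussianReal 0 1) (f := (· ^ n)) (by fun_prop)

lemma indepFun_sq_eval_gaussVec {l i : Fin d} (h : l ≠ i) :
    IndepFun (fun g : Fin d → ℝ => g l ^ 2) (fun g => g i ^ 2) (gaussVec d 1) :=
  ((iIndepFun_pi (μ := fun _ : Fin d => gaussianReal 0 1) (X := fun _ => id)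
    fun _ => aemeasurable_id).indepFun h).comp (measurable_id.pow_const 2)
    (measurable_id.pow_const 2)

lemma integrable_sq_mul_sq_gaussVec (l i : Fin d) :
    Integrable (fun g => g l ^ 2 * g i ^ 2) (gaussVec d 1) := by
  rcases eq_or_ne l i with rfl | h
  · simpa only [← pow_add] using integrable_pow_eval_gaussVec 4 l
  · exact (indepFun_sq_eval_gaussVec h).integrable_mul (integrable_pow_eval_gaussVec 2 l)
      (integrable_pow_eval_gaussVec 2 i)

lemma integral_sq_mul_sq_gaussVec (l i : Fin d) :
    ∫ g, g l ^ 2 * g i ^ 2 ∂(gaussVec d 1) = if l = i then 3 else 1 := by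
  split_ifs with h
  · subst h
    simp only [← pow_add]
    rw [integral_pow_eval_gaussVec, integral_pow_four_gaussianReal]
  · rw [(indepFun_sq_eval_gaussVec h).integral_fun_mul_eq_mul_integral
      (integrable_pow_eval_gaussVec 2 l).aestronglyMeasurable
      (integrable_pow_eval_gaussVec 2 i).aestronglyMeasurable, integral_pow_eval_gaussVec,
      integral_pow_eval_gaussVec, integral_sq_gaussianReal, one_mul]

lemma integral_centeredNormSq_mul_sq_eval (i : Fin d) :
    ∫ g, centeredNormSq g * g i ^ 2 ∂(gaussVec d 1) = 2 := by
  simp_rw [centeredNormSq, sub_mul, Finset.sum_mul]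
  rw [integral_sub (integrable_finsetSum _ fun l _ => integrable_sq_mul_sq_gaussVec l i)
      ((integrable_pow_eval_gaussVec 2 i).const_mul _),
    integral_finsetSum _ fun l _ => integrable_sq_mul_sq_gaussVec l i, integral_const_mul,
    integral_pow_eval_gaussVec, integral_sq_gaussianReal]
  have hsplit (l : Fin d) : (if l = i then 3 else 1 : ℝ) = 1 + if l = i then 2 else 0 := by
    split_ifs <;> norm_num
  simp [integral_sq_mul_sq_gaussVec, hsplit, Finset.sum_add_distrib]

lemma exists_orthonormalBasis_apply_eq {x : EuclideanSpace ℝ (Fin d)} (hx : ‖x‖ = 1)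
    (i : Fin d) : ∃ b : OrthonormalBasis (Fin d) ℝ (EuclideanSpace ℝ (Fin d)), b i = x := by
  have hx' : Orthonormal ℝ (({i} : Set (Fin d)).domRestrict fun _ => x) :=
    orthonormal_subsingleton_iff.2 fun _ => hx
  obtain ⟨b, hb⟩ := hx'.exists_orthonormalBasis_extension_of_card_eq (by simp)
  exact ⟨b, hb i rfl⟩

lemma identDistrib_centeredNormSq_dotProduct {x : Fin d → ℝ} (hx : x ⬝ᵥ x = 1) (i : Fin d) :
    IdentDistrib (fun g => (centeredNormSq g, x ⬝ᵥ g)) (fun g => (centeredNormSq g, g i))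
      (gaussVec d 1) (gaussVec d 1) := by
  have hnorm : ‖WithLp.toLp 2 x‖ = 1 := by
    rw [← sq_eq_sq₀ (norm_nonneg _) zero_le_one, EuclideanSpace.real_norm_sq_eq, one_pow, ← hx]
    simp only [dotProduct, pow_two]
  obtain ⟨b, hb⟩ := exists_orthonormalBasis_apply_eq hnorm i
  let F : EuclideanSpace ℝ (Fin d) → ℝ × ℝ :=
    fun v => (‖v‖ ^ 2 - d, inner ℝ (WithLp.toLp 2 x) v)
  have hF : Measurable F := by fun_prop
  have hmap := congrArg (Measure.map F)
    (map_pi_eq_stdGaussian.trans (stdGaussian_eq_map_pi_orthonormalBasis b))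
  rw [Measure.map_map hF (by fun_prop), Measure.map_map hF (by fun_prop)] at hmap
  refine ⟨by fun_prop, by fun_prop, ?_⟩
  convert! hmap using 2
  · funext g
    simp [F, centeredNormSq, EuclideanSpace.real_norm_sq_eq, PiLp.inner_apply, dotProduct,
      mul_comm]
  · funext g
    have hsq : ‖∑ l, g l • b l‖ ^ 2 = ∑ l, g l ^ 2 := by
      rw [← real_inner_self_eq_norm_sq, b.orthonormal.inner_sum]
      simp [pow_two]
    have hinner : inner ℝ (WithLp.toLp 2 x) (∑ l, g l • b l) = g i := by
      rw [← hb, b.orthonormal.inner_right_fintype]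
    simp [F, centeredNormSq, hsq, hinner]

lemma nonempty_of_dotProduct_self_eq_one {ι : Type*} [Fintype ι] {x : ι → ℝ}
    (hx : x ⬝ᵥ x = 1) : Nonempty ι := by
  by_contra! h
  simp [dotProduct] at hx

lemma expMomentLE_mul_sq_dotProduct {x : Fin d → ℝ} (hx : x ⬝ᵥ x = 1) {c : ℝ}
    (hc : c < 1 / 2) :
    ExpMomentLE (fun g => c * (x ⬝ᵥ g) ^ 2) (√(1 - 2 * c))⁻¹ (gaussVec d 1) := by
  obtain ⟨i⟩ := nonempty_of_dotProduct_self_eq_one hx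
  have hident := (identDistrib_centeredNormSq_dotProduct hx i).comp
    (u := fun p : ℝ × ℝ => Real.exp (c * p.2 ^ 2)) (by fun_prop)
  have hcoord : Integrable (fun g : Fin d → ℝ => Real.exp (c * g i ^ 2)) (gaussVec d 1) :=
    integrable_comp_eval (μ := fun _ => gaussianReal 0 1) (f := fun y => Real.exp (c * y ^ 2))
      (integrable_exp_mul_sq_gaussianReal_s5 hc)
  refine ⟨hident.integrable_iff.2 hcoord, (hident.integral_eq.trans ?_).le⟩
  rw [← integral_exp_mul_sq_gaussianReal hc]
  exact integral_comp_eval (μ := fun _ : Fin d => gaussianReal 0 1) (i := i)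
    (f := fun y => Real.exp (c * y ^ 2)) (by fun_prop)

lemma integral_centeredNormSq_mul_sq_dotProduct {x : Fin d → ℝ} (hx : x ⬝ᵥ x = 1) :
    ∫ g, centeredNormSq g * (x ⬝ᵥ g) ^ 2 ∂(gaussVec d 1) = 2 := by
  obtain ⟨i⟩ := nonempty_of_dotProduct_self_eq_one hx
  exact ((identDistrib_centeredNormSq_dotProduct hx i).comp
    (u := fun p : ℝ × ℝ => p.1 * p.2 ^ 2) (by fun_prop)).integral_eq.trans
    (integral_centeredNormSq_mul_sq_eval i)

end RotationInvariance

section PointwiseBounds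

variable {a K w q c : ℝ}

lemma pow_four_le_exp_sq (q : ℝ) : q ^ 4 ≤ 15 * Real.exp (3 / 8 * q ^ 2) := by
  have h := Real.pow_div_factorial_le_exp (3 / 8 * q ^ 2) (by positivity) 2
  norm_num [Nat.factorial] at h
  nlinarith [sq_nonneg (q ^ 2)]

lemma mul_sq_mul_exp_div_four_le {u : ℝ} :
    u * q ^ 2 * Real.exp (u / 4) ≤ 2 * Real.exp u + 30 * Real.exp (3 / 8 * q ^ 2) := by
  have hu4 : u ≤ 4 * Real.exp (u / 4) := by linarith [Real.add_one_le_exp (u / 4)]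
  have hpow : Real.exp u = Real.exp (u / 4) ^ 4 := by
    rw [← Real.exp_nat_mul]
    congr 1
    push_cast
    ring
  rw [hpow]
  calc u * q ^ 2 * Real.exp (u / 4)
      ≤ 4 * Real.exp (u / 4) * q ^ 2 * Real.exp (u / 4) := by gcongr
    _ ≤ 2 * Real.exp (u / 4) ^ 4 + 2 * q ^ 4 := by
        nlinarith [sq_nonneg (Real.exp (u / 4) ^ 2 - q ^ 2)]
    _ ≤ _ := by linarith [pow_four_le_exp_sq q]

lemma abs_mul_sq_le_of_le_abs (ha : 0 < a) (hw : K ≤ |w|) :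
    |w * q ^ 2| ≤ a * Real.exp (-K / (4 * a))
      * (2 * Real.exp (|w| / a) + 30 * Real.exp (3 / 8 * q ^ 2)) := by
  have hgain : 1 ≤ Real.exp (-K / (4 * a)) * Real.exp (|w| / a / 4) := by
    rw [← Real.exp_add, Real.one_le_exp_iff,
      show -K / (4 * a) + |w| / a / 4 = (|w| - K) / (4 * a) by field_simp; ring]
    exact div_nonneg (sub_nonneg.2 hw) (by positivity)
  calc |w * q ^ 2| = a * (|w| / a * q ^ 2) := by
        rw [abs_mul, abs_of_nonneg (sq_nonneg q)]
        field_simp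
    _ ≤ a * (|w| / a * q ^ 2) * (Real.exp (-K / (4 * a)) * Real.exp (|w| / a / 4)) :=
        le_mul_of_one_le_right (by positivity) hgain
    _ = a * Real.exp (-K / (4 * a)) * (|w| / a * q ^ 2 * Real.exp (|w| / a / 4)) := by ring
    _ ≤ _ := by
        gcongr
        exact mul_sq_mul_exp_div_four_le

lemma sq_mul_pow_four_mul_exp_sq_div_eight_le {u : ℝ} (hu : 0 ≤ u) :
    u ^ 2 * q ^ 4 * Real.exp (q ^ 2 / 8)
      ≤ 12 * Real.exp u + 49152 * Real.exp (3 / 8 * q ^ 2) := by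
  have hu4 := Real.pow_div_factorial_le_exp u hu 4
  have hq8 := Real.pow_div_factorial_le_exp (q ^ 2 / 8) (by positivity) 4
  norm_num [Nat.factorial] at hu4 hq8
  have hcube : Real.exp (3 / 8 * q ^ 2) = Real.exp (q ^ 2 / 8) * Real.exp (q ^ 2 / 8) ^ 2 := by
    rw [← pow_succ', ← Real.exp_nat_mul]
    congr 1
    push_cast
    ring
  set s := Real.exp (q ^ 2 / 8)
  rw [hcube]
  calc u ^ 2 * q ^ 4 * s ≤ u ^ 4 / 2 + (q ^ 2 / 8) ^ 4 * 2048 * s ^ 2 := by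
        linarith [sq_nonneg (u ^ 2 - q ^ 4 * s)]
    _ ≤ 12 * Real.exp u + 24 * s * 2048 * s ^ 2 := by
        gcongr <;> linarith
    _ = _ := by ring

lemma sq_mul_sq_mul_exp_abs_le (ha : 0 < a) (hc : |c * w| ≤ 1 / 8) :
    (w * q ^ 2) ^ 2 * Real.exp |c * (w * q ^ 2)|
      ≤ a ^ 2 * (12 * Real.exp (|w| / a) + 49152 * Real.exp (3 / 8 * q ^ 2)) := by
  have hexp : |c * (w * q ^ 2)| ≤ q ^ 2 / 8 := by
    rw [← mul_assoc, abs_mul, abs_of_nonneg (sq_nonneg q)]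
    linarith [mul_le_mul_of_nonneg_right hc (sq_nonneg q)]
  have hsq : (w * q ^ 2) ^ 2 = a ^ 2 * ((|w| / a) ^ 2 * q ^ 4) := by
    rw [div_pow, sq_abs]
    field_simp
  calc (w * q ^ 2) ^ 2 * Real.exp |c * (w * q ^ 2)|
      ≤ a ^ 2 * ((|w| / a) ^ 2 * q ^ 4) * Real.exp (q ^ 2 / 8) := by rw [hsq]; gcongr
    _ = a ^ 2 * ((|w| / a) ^ 2 * q ^ 4 * Real.exp (q ^ 2 / 8)) := by ring
    _ ≤ _ := by
        gcongr
        exact sq_mul_pow_four_mul_exp_sq_div_eight_le (by positivity)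

lemma exp_le_one_add_self_add_sq_mul_exp_abs (y : ℝ) :
    Real.exp y ≤ 1 + y + y ^ 2 * Real.exp |y| := by
  have h := Complex.norm_exp_sub_sum_le_norm_mul_exp y 2
  simp only [Finset.sum_range_succ, Finset.sum_range_zero] at h
  norm_cast at h
  simp at h
  linarith [le_abs_self (Real.exp y - (1 + y))]

end PointwiseBounds

section Truncation

variable {Ω : Type*} {w q : Ω → ℝ} {a K c : ℝ}

lemma abs_sub_truncation_le_abs_self (ω : Ω) : |w ω - truncation w K ω| ≤ |w ω| := by
  by_cases h : w ω ∈ Set.Ioc (-K) K <;> simp [truncation, h]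

lemma abs_mul_sq_sub_truncation_mul_sq_le (ha : 0 < a) (ω : Ω) :
    |w ω * q ω ^ 2 - truncation w K ω * q ω ^ 2| ≤ a * Real.exp (-K / (4 * a))
      * (2 * Real.exp (|w ω| / a) + 30 * Real.exp (3 / 8 * q ω ^ 2)) := by
  rcases lt_or_ge |w ω| K with h | h
  · rw [truncation_eq_self h, sub_self, abs_zero]
    positivity
  · refine le_trans ?_ (abs_mul_sq_le_of_le_abs ha h)
    rw [← sub_mul, abs_mul, abs_mul]
    exact mul_le_mul_of_nonneg_right (abs_sub_truncation_le_abs_self ω) (abs_nonneg _)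

lemma sq_truncation_mul_sq_mul_exp_abs_le (ha : 0 < a) (hc : |c * K| ≤ 1 / 8) (ω : Ω) :
    (truncation w K ω * q ω ^ 2) ^ 2 * Real.exp |c * (truncation w K ω * q ω ^ 2)|
      ≤ a ^ 2 * (12 * Real.exp (|w ω| / a) + 49152 * Real.exp (3 / 8 * q ω ^ 2)) := by
  have hcw : |c * truncation w K ω| ≤ 1 / 8 := by
    rw [abs_mul] at hc ⊢
    exact (mul_le_mul_of_nonneg_left (abs_truncation_le_bound w K ω) (abs_nonneg c)).trans hc
  refine (sq_mul_sq_mul_exp_abs_le ha hcw).trans ?_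
  gcongr a ^ 2 * (12 * Real.exp (?_ / a) + _)
  exact abs_truncation_le_abs_self w K ω

variable [MeasurableSpace Ω] {μ : Measure Ω} {A B : ℝ}

lemma integrable_mul_sq (ha : 0 < a) (hwm : AEStronglyMeasurable w μ)
    (hqm : AEStronglyMeasurable q μ) (hw : ExpMomentLE (fun ω => |w ω| / a) A μ)
    (hq : ExpMomentLE (fun ω => 3 / 8 * q ω ^ 2) B μ) :
    Integrable (fun ω => w ω * q ω ^ 2) μ :=
  ((hw.integrable_const_mul_add hq 2 30).const_mul _).mono' (hwm.mul (hqm.pow 2))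
    (.of_forall fun _ => abs_mul_sq_le_of_le_abs ha (abs_nonneg _))

lemma integrable_mul_sq_sub_truncation_mul_sq (ha : 0 < a) (hwm : AEStronglyMeasurable w μ)
    (hqm : AEStronglyMeasurable q μ) (hw : ExpMomentLE (fun ω => |w ω| / a) A μ)
    (hq : ExpMomentLE (fun ω => 3 / 8 * q ω ^ 2) B μ) :
    Integrable (fun ω => w ω * q ω ^ 2 - truncation w K ω * q ω ^ 2) μ :=
  ((hw.integrable_const_mul_add hq 2 30).const_mul _).mono'
    ((hwm.mul (hqm.pow 2)).sub (hwm.truncation.mul (hqm.pow 2)))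
    (.of_forall fun ω => abs_mul_sq_sub_truncation_mul_sq_le ha ω)

lemma integrable_truncation_mul_sq (ha : 0 < a) (hwm : AEStronglyMeasurable w μ)
    (hqm : AEStronglyMeasurable q μ) (hw : ExpMomentLE (fun ω => |w ω| / a) A μ)
    (hq : ExpMomentLE (fun ω => 3 / 8 * q ω ^ 2) B μ) :
    Integrable (fun ω => truncation w K ω * q ω ^ 2) μ :=
  ((integrable_mul_sq ha hwm hqm hw hq).sub
    (integrable_mul_sq_sub_truncation_mul_sq ha hwm hqm hw hq)).congr
    (.of_forall fun _ => sub_sub_self _ _)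

lemma abs_integral_mul_sq_sub_integral_truncation_mul_sq_le (ha : 0 < a)
    (hwm : AEStronglyMeasurable w μ) (hqm : AEStronglyMeasurable q μ)
    (hw : ExpMomentLE (fun ω => |w ω| / a) A μ)
    (hq : ExpMomentLE (fun ω => 3 / 8 * q ω ^ 2) B μ) :
    |∫ ω, w ω * q ω ^ 2 ∂μ - ∫ ω, truncation w K ω * q ω ^ 2 ∂μ|
      ≤ a * Real.exp (-K / (4 * a)) * (2 * A + 30 * B) := by
  rw [← integral_sub (integrable_mul_sq ha hwm hqm hw hq)
    (integrable_truncation_mul_sq ha hwm hqm hw hq), ← Real.norm_eq_abs]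
  refine (norm_integral_le_of_norm_le
    ((hw.integrable_const_mul_add hq 2 30).const_mul _)
    (.of_forall fun ω => abs_mul_sq_sub_truncation_mul_sq_le ha ω)).trans ?_
  rw [integral_const_mul]
  gcongr
  exact hw.integral_const_mul_add_le hq (by norm_num) (by norm_num)

lemma expMomentLE_of_sq_mul_exp_abs_le [IsProbabilityMeasure μ] {Z F : Ω → ℝ} {V : ℝ}
    (hZ : Integrable Z μ) (hF : Integrable F μ)
    (hle : ∀ ω, Z ω ^ 2 * Real.exp |c * Z ω| ≤ F ω) (hFV : ∫ ω, F ω ∂μ ≤ V) :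
    ExpMomentLE (fun ω => c * Z ω) (Real.exp (c * ∫ ω, Z ω ∂μ + c ^ 2 * V)) μ := by
  have hdom (ω : Ω) : Real.exp (c * Z ω) ≤ 1 + c * Z ω + c ^ 2 * F ω := by
    refine (exp_le_one_add_self_add_sq_mul_exp_abs _).trans ?_
    rw [mul_pow, mul_assoc]
    gcongr
    exact hle ω
  have hlin : Integrable (fun ω => 1 + c * Z ω) μ := (integrable_const 1).add (hZ.const_mul c)
  have hdomi : Integrable (fun ω => 1 + c * Z ω + c ^ 2 * F ω) μ := hlin.add (hF.const_mul _)
  have hexpi : Integrable (fun ω => Real.exp (c * Z ω)) μ := by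
    refine hdomi.mono' (Real.measurable_exp.comp_aemeasurable
      (hZ.aemeasurable.const_mul c)).aestronglyMeasurable (.of_forall fun ω => ?_)
    rw [Real.norm_of_nonneg (Real.exp_nonneg _)]
    exact hdom ω
  refine ⟨hexpi, ?_⟩
  calc ∫ ω, Real.exp (c * Z ω) ∂μ ≤ ∫ ω, (1 + c * Z ω + c ^ 2 * F ω) ∂μ :=
        integral_mono hexpi hdomi hdom
    _ = 1 + c * ∫ ω, Z ω ∂μ + c ^ 2 * ∫ ω, F ω ∂μ := by
        rw [integral_add hlin (hF.const_mul _), integral_add (integrable_const 1)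
          (hZ.const_mul c), integral_const_mul, integral_const_mul, integral_const,
          probReal_univ, one_smul]
    _ ≤ (c * ∫ ω, Z ω ∂μ + c ^ 2 * V) + 1 := by
        linarith [mul_le_mul_of_nonneg_left hFV (sq_nonneg c)]
    _ ≤ _ := Real.add_one_le_exp _

lemma expMomentLE_mul_truncation_mul_sq_sub_integral [IsProbabilityMeasure μ] (ha : 0 < a)
    (hwm : AEStronglyMeasurable w μ) (hqm : AEStronglyMeasurable q μ)
    (hw : ExpMomentLE (fun ω => |w ω| / a) A μ)
    (hq : ExpMomentLE (fun ω => 3 / 8 * q ω ^ 2) B μ) (hc : |c * K| ≤ 1 / 8) :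
    ExpMomentLE (fun ω => c * (truncation w K ω * q ω ^ 2 - ∫ ω', w ω' * q ω' ^ 2 ∂μ))
      (Real.exp (|c| * (a * Real.exp (-K / (4 * a)) * (2 * A + 30 * B))
        + c ^ 2 * (a ^ 2 * (12 * A + 49152 * B)))) μ := by
  have hcentered := (expMomentLE_of_sq_mul_exp_abs_le
    (integrable_truncation_mul_sq ha hwm hqm hw hq)
    ((hw.integrable_const_mul_add hq 12 49152).const_mul (a ^ 2))
    (sq_truncation_mul_sq_mul_exp_abs_le ha hc) (V := a ^ 2 * (12 * A + 49152 * B)) (by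
      rw [integral_const_mul]
      gcongr
      exact hw.integral_const_mul_add_le hq (by norm_num) (by norm_num))).add_const
    (-(c * ∫ ω, w ω * q ω ^ 2 ∂μ))
  have hbias : -(c * (∫ ω, w ω * q ω ^ 2 ∂μ - ∫ ω, truncation w K ω * q ω ^ 2 ∂μ))
      ≤ |c| * (a * Real.exp (-K / (4 * a)) * (2 * A + 30 * B)) := by
    refine (neg_le_abs _).trans ?_
    rw [abs_mul]
    exact mul_le_mul_of_nonneg_left
      (abs_integral_mul_sq_sub_integral_truncation_mul_sq_le ha hwm hqm hw hq) (abs_nonneg c)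
  simp_rw [mul_sub, sub_eq_add_neg]
  refine hcentered.mono ?_
  rw [← Real.exp_add]
  exact Real.exp_le_exp.2 (by linarith)

lemma measureReal_abs_sum_truncation_mul_sq_sub_integral_ge_le {ι : Type*} [Fintype ι]
    [IsProbabilityMeasure μ] (ha : 0 < a) (hwm : AEStronglyMeasurable w μ)
    (hqm : AEStronglyMeasurable q μ) (hw : ExpMomentLE (fun ω => |w ω| / a) A μ)
    (hq : ExpMomentLE (fun ω => 3 / 8 * q ω ^ 2) B μ) (hc0 : 0 ≤ c) (hc : |c * K| ≤ 1 / 8)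
    (t : ℝ) :
    (Measure.pi fun _ : ι => μ).real
        {ω | t ≤ |∑ i, (truncation w K (ω i) * q (ω i) ^ 2 - ∫ ω', w ω' * q ω' ^ 2 ∂μ)|}
      ≤ 2 * Real.exp (c * (a * Real.exp (-K / (4 * a)) * (2 * A + 30 * B))
        + c ^ 2 * (a ^ 2 * (12 * A + 49152 * B))) ^ Fintype.card ι * Real.exp (-(c * t)) := by
  refine ExpMomentLE.measureReal_abs_sum_ge_le (μ := μ)
    (X := fun ω => truncation w K ω * q ω ^ 2 - ∫ ω', w ω' * q ω' ^ 2 ∂μ) hc0 ?_ ?_ t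
  · simpa only [abs_of_nonneg hc0] using
      expMomentLE_mul_truncation_mul_sq_sub_integral ha hwm hqm hw hq hc
  · simpa only [abs_neg, neg_sq, abs_of_nonneg hc0] using
      expMomentLE_mul_truncation_mul_sq_sub_integral (c := -c) ha hwm hqm hw hq
        (by rwa [neg_mul, abs_neg])

end Truncation

section Net

open Metric

lemma encard_le_five_pow_finrank_of_isSeparated {E : Type*} [NormedAddCommGroup E]
    [NormedSpace ℝ E] [FiniteDimensional ℝ E] {C : Set E} {r : NNReal} (hr : r ≠ 0)
    (hC : C ⊆ closedBall 0 (2 * r)) (hsep : IsSeparated r C) :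
    C.encard ≤ 5 ^ Module.finrank ℝ E := by
  classical
  by_contra! hlt
  obtain ⟨t, htC, ht⟩ := Set.exists_subset_encard_eq (Order.add_one_le_of_lt hlt)
  obtain ⟨s, rfl⟩ := (Set.finite_of_encard_eq_coe (k := 5 ^ Module.finrank ℝ E + 1)
    (by exact_mod_cast ht)).exists_finset_coe
  have hr0 : (0 : ℝ) < r := by positivity
  have hcard := Besicovitch.card_le_of_separated (s.image ((r : ℝ)⁻¹ • ·))
    (Finset.forall_mem_image.2 fun x hx => by
      have := mem_closedBall_zero_iff.1 (hC (htC hx))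
      rwa [norm_smul, norm_inv, Real.norm_of_nonneg hr0.le, inv_mul_le_iff₀ hr0, mul_comm])
    (Finset.forall_mem_image.2 fun x hx => Finset.forall_mem_image.2 fun y hy hxy => by
      have hlt : (r : ENNReal) < edist x y := hsep (htC hx) (htC hy) fun h => hxy (by rw [h])
      rw [edist_nndist, ENNReal.coe_lt_coe, ← NNReal.coe_lt_coe, coe_nndist, dist_eq_norm] at hlt
      rw [← smul_sub, norm_smul, norm_inv, Real.norm_of_nonneg hr0.le, le_inv_mul_iff₀ hr0]
      linarith)
  rw [Finset.card_image_of_injective _ (smul_right_injective E (inv_ne_zero hr0.ne'))] at hcard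
  rw [Set.encard_coe_eq_coe_finsetCard] at ht
  exact (hcard.trans_lt (Nat.lt_succ_self _)).ne (by exact_mod_cast ht)

lemma exists_finset_isCover_of_subset_closedBall {E : Type*} [NormedAddCommGroup E]
    [NormedSpace ℝ E] [FiniteDimensional ℝ E] {A : Set E} {r : NNReal} (hr : r ≠ 0)
    (hA : A ⊆ closedBall 0 (2 * r)) :
    ∃ s : Finset E, s.card ≤ 5 ^ Module.finrank ℝ E ∧ ↑s ⊆ A ∧ IsCover r A s := by
  have hpack : packingNumber r A ≤ 5 ^ Module.finrank ℝ E :=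
    iSup_le fun C => iSup_le fun hCA => iSup_le fun hsep =>
      encard_le_five_pow_finrank_of_isSeparated hr (hCA.trans hA) hsep
  have hfin : packingNumber r A ≠ ⊤ := ne_top_of_le_ne_top
    (by exact_mod_cast ENat.natCast_ne_top (5 ^ Module.finrank ℝ E)) hpack
  have hcard := encard_maximalSeparatedSet hfin
  obtain ⟨s, hs⟩ := (Set.encard_ne_top_iff.1 (hcard.trans_ne hfin)).exists_finset_coe
  refine ⟨s, ?_, hs ▸ maximalSeparatedSet_subset, hs ▸ isCover_maximalSeparatedSet hfin⟩
  rw [← hs, Set.encard_coe_eq_coe_finsetCard] at hcard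
  exact_mod_cast hcard.trans_le hpack

end Net

section SelfAdjoint

open Metric

variable {E : Type*} [NormedAddCommGroup E] [InnerProductSpace ℝ E] {T : E →L[ℝ] E}

lemma norm_le_of_abs_inner_map_self_le (hT : T.IsSymmetric) {R : ℝ} (hR : 0 ≤ R)
    (h : ∀ y ∈ sphere (0 : E) 1, |inner ℝ (T y) y| ≤ R) : ‖T‖ ≤ R := by
  rw [T.norm_eq_iSup_rayleighQuotient hT]
  refine ciSup_le fun x => ?_
  rcases eq_or_ne x 0 with rfl | hx
  · simpa using hR
  · have hunit : ‖((‖x‖ : ℝ)⁻¹ • x : E)‖ = 1 := norm_smul_inv_norm hx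
    rw [← T.rayleigh_smul x (inv_ne_zero (norm_ne_zero_iff.2 hx)),
      ContinuousLinearMap.rayleighQuotient, hunit, one_pow, div_one]
    exact h _ (mem_sphere_zero_iff_norm.2 hunit)

lemma abs_inner_map_self_sub_inner_map_self_le (hT : T.IsSymmetric) (x y : E) :
    |inner ℝ (T y) y - inner ℝ (T x) x| ≤ ‖T‖ * (‖y - x‖ * ‖y + x‖) := by
  have hdiff : inner ℝ (T y) y - inner ℝ (T x) x = inner ℝ (T (y - x)) (y + x) := by
    have hsymm : inner ℝ (T x) y = inner ℝ (T y) x := (hT x y).trans (real_inner_comm _ _)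
    simp only [map_sub, inner_add_right, inner_sub_left, hsymm]
    ring
  rw [hdiff, ← mul_assoc]
  exact (abs_real_inner_le_norm _ _).trans (by gcongr; exact T.le_opNorm _)

lemma norm_sub_mul_norm_add_le_of_norm_sub_le {x y : E} (hx : ‖x‖ = 1) (hy : ‖y‖ = 1)
    (hxy : ‖y - x‖ ≤ 1 / 2) : ‖y - x‖ * ‖y + x‖ ≤ 31 / 32 := by
  have hpar := parallelogram_law_with_norm ℝ y x
  rw [hx, hy] at hpar
  have hsq : ‖y - x‖ ^ 2 ≤ 1 / 4 := by nlinarith [norm_nonneg (y - x)]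
  refine le_of_sq_le_sq ?_ (by norm_num)
  nlinarith

lemma norm_le_of_isCover_sphere (hT : T.IsSymmetric) {s : Set E} (hs : s ⊆ sphere 0 1)
    (hcover : IsCover (1 / 2) (sphere 0 1) s) {M : ℝ} (hM : 0 ≤ M)
    (h : ∀ x ∈ s, |inner ℝ (T x) x| ≤ M) : ‖T‖ ≤ 32 * M := by
  have hsphere : ∀ y ∈ sphere (0 : E) 1, |inner ℝ (T y) y| ≤ M + ‖T‖ * (31 / 32) := by
    intro y hy
    obtain ⟨x, hx, hxy⟩ := Set.mem_iUnion₂.1 (isCover_iff_subset_iUnion_closedBall.1 hcover hy)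
    have hprod := norm_sub_mul_norm_add_le_of_norm_sub_le (mem_sphere_zero_iff_norm.1 (hs hx))
      (mem_sphere_zero_iff_norm.1 hy) (by simpa [dist_eq_norm] using hxy)
    calc |inner ℝ (T y) y|
        ≤ |inner ℝ (T x) x| + |inner ℝ (T y) y - inner ℝ (T x) x| := by
          simpa using abs_add_le (inner ℝ (T x) x) (inner ℝ (T y) y - inner ℝ (T x) x)
      _ ≤ M + ‖T‖ * (31 / 32) := by
          gcongr
          · exact h x hx
          · exact (abs_inner_map_self_sub_inner_map_self_le hT x y).trans (by gcongr)
  linarith [norm_le_of_abs_inner_map_self_le hT (by positivity) hsphere]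

end SelfAdjoint

lemma specNorm_smul {m k : ℕ} (r : ℝ) (A : Matrix (Fin m) (Fin k) ℝ) :
    specNorm (r • A) = |r| * specNorm A := by
  simp only [specNorm, map_smul, norm_smul, Real.norm_eq_abs]

lemma exists_finset_specNorm_le (d : ℕ) :
    ∃ s : Finset (Fin d → ℝ), s.card ≤ 5 ^ d ∧ (∀ x ∈ s, x ⬝ᵥ x = 1) ∧
      ∀ A : Matrix (Fin d) (Fin d) ℝ, A.IsHermitian → ∀ M, 0 ≤ M →
        (∀ x ∈ s, |x ⬝ᵥ A *ᵥ x| ≤ M) → specNorm A ≤ 32 * M := by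
  obtain ⟨s, hcard, hs, hcover⟩ := exists_finset_isCover_of_subset_closedBall
    (r := 1 / 2) (A := Metric.sphere (0 : EuclideanSpace ℝ (Fin d)) 1) (by norm_num)
    (by simpa using Metric.sphere_subset_closedBall)
  refine ⟨s.image WithLp.ofLp, ?_, ?_, fun A hA M hM h => ?_⟩
  · simpa using Finset.card_image_le.trans hcard
  · refine Finset.forall_mem_image.2 fun x hx => ?_
    have hnorm := mem_sphere_zero_iff_norm.1 (hs hx)
    rw [← one_pow 2, ← hnorm, EuclideanSpace.real_norm_sq_eq]
    simp only [dotProduct, pow_two]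
  · refine norm_le_of_isCover_sphere ?_ hs hcover hM fun x hx => ?_
    · exact Matrix.isSymmetric_toEuclideanLin_iff.2 hA
    · convert Finset.forall_mem_image.1 h hx using 2
      simp [EuclideanSpace.inner_eq_star_dotProduct]

/-- The deviation of `∑ i, (‖G i‖² - d) • G i (G i)ᵀ` from its mean `2 N • 1` under i.i.d. standard
Gaussian `G i`. -/
def fourthMomentDeviation {N d : ℕ} (G : Fin N → Fin d → ℝ) : Matrix (Fin d) (Fin d) ℝ :=
  (∑ i, centeredNormSq (G i) • vecMulVec (G i) (G i)) - (2 * N : ℝ) • 1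

section FourthMomentDeviation

variable {N d : ℕ}

lemma isHermitian_fourthMomentDeviation (G : Fin N → Fin d → ℝ) :
    (fourthMomentDeviation G).IsHermitian := by
  ext j k
  simp [fourthMomentDeviation, Matrix.sum_apply, vecMulVec_apply, one_apply, mul_comm,
    eq_comm (a := j)]

lemma dotProduct_fourthMomentDeviation_mulVec (G : Fin N → Fin d → ℝ) {x : Fin d → ℝ}
    (hx : x ⬝ᵥ x = 1) :
    x ⬝ᵥ fourthMomentDeviation G *ᵥ x = ∑ i, (centeredNormSq (G i) * (x ⬝ᵥ G i) ^ 2 - 2) := by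
  have hterm (i : Fin N) : x ⬝ᵥ (centeredNormSq (G i) • vecMulVec (G i) (G i)) *ᵥ x
      = centeredNormSq (G i) * (x ⬝ᵥ G i) ^ 2 := by
    rw [smul_mulVec, vecMulVec_mulVec, op_smul_eq_smul, dotProduct_smul, dotProduct_smul,
      dotProduct_comm (G i) x, smul_eq_mul, smul_eq_mul, pow_two]
  rw [fourthMomentDeviation, sub_mulVec, dotProduct_sub, sum_mulVec, dotProduct_sum,
    smul_mulVec, one_mulVec, dotProduct_smul, hx]
  simp_rw [hterm]
  simp [mul_comm]

lemma sum_smul_vecMulVec_smul_sub_eq (r : ℝ) (G : Fin N → Fin d → ℝ) :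
    (∑ i, ((∑ l, (r • G) i l ^ 2) - r ^ 2 * d) • vecMulVec ((r • G) i) ((r • G) i))
      - (2 * N * r ^ 4) • (1 : Matrix (Fin d) (Fin d) ℝ) = r ^ 4 • fourthMomentDeviation G := by
  rw [fourthMomentDeviation, smul_sub, Finset.smul_sum, smul_smul, mul_comm (r ^ 4)]
  congr 2
  ext i j k
  simp only [centeredNormSq, Matrix.smul_apply, vecMulVec_apply, Pi.smul_apply, smul_eq_mul,
    mul_pow, ← Finset.mul_sum]
  ring

end FourthMomentDeviation

instance (N k : ℕ) (v : NNReal) : IsProbabilityMeasure (iidGaussVec N k v) := by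
  unfold iidGaussVec
  infer_instance

lemma gaussVec_eq_map_smul (k : ℕ) (v : NNReal) :
    gaussVec k v = (gaussVec k 1).map (√(v : ℝ) • ·) := by
  have hcoord : gaussianReal 0 v = (gaussianReal 0 1).map (√(v : ℝ) * ·) := by
    rw [gaussianReal_map_const_mul, mul_zero, mul_one]
    congr 1
    ext
    simp
  rw [gaussVec, hcoord]
  exact (Measure.pi_map_pi (μ := fun _ : Fin k => gaussianReal 0 1) fun _ => by fun_prop).symm

lemma iidGaussVec_eq_map_smul (N k : ℕ) (v : NNReal) :
    iidGaussVec N k v = (iidGaussVec N k 1).map (√(v : ℝ) • ·) := by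
  have : IsProbabilityMeasure ((gaussVec k 1).map (√(v : ℝ) • ·)) :=
    gaussVec_eq_map_smul k v ▸ inferInstance
  rw [iidGaussVec, gaussVec_eq_map_smul]
  exact (Measure.pi_map_pi (μ := fun _ : Fin N => gaussVec k 1) fun _ => by fun_prop).symm

section UnionBound

variable {N d : ℕ}

lemma measureReal_exists_le_abs_centeredNormSq_le (hd : 1 ≤ d) (K : ℝ) :
    (iidGaussVec N d 1).real {G | ∃ i, K ≤ |centeredNormSq (G i)|}
      ≤ N * (3 * Real.exp (-(K / (8 * √d)))) := by
  have hsingle (i : Fin N) : (iidGaussVec N d 1).real {G | K ≤ |centeredNormSq (G i)|}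
      ≤ 3 * Real.exp (-(K / (8 * √d))) := by
    have ha : (0 : ℝ) < 8 * √d := by positivity
    have hmp : MeasurePreserving (Function.eval i) (iidGaussVec N d 1) (gaussVec d 1) :=
      measurePreserving_eval (μ := fun _ : Fin N => gaussVec d 1) i
    have hmeas : MeasurableSet {g : Fin d → ℝ | K ≤ |centeredNormSq g|} :=
      measurableSet_le measurable_const measurable_centeredNormSq.abs
    refine (hmp.measureReal_preimage hmeas.nullMeasurableSet).trans_le ?_
    simpa only [div_le_div_iff_of_pos_right ha] using
      (expMomentLE_abs_centeredNormSq hd).measureReal_ge_le (K / (8 * √d))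
  rw [Set.ofPred_exists]
  refine (measureReal_iUnion_fintype_le _).trans ((Finset.sum_le_sum fun i _ => hsingle i).trans ?_)
  simp

lemma measureReal_abs_sum_truncation_centeredNormSq_ge_le (hd : 1 ≤ d) {x : Fin d → ℝ}
    (hx : x ⬝ᵥ x = 1) {c K : ℝ} (hc0 : 0 ≤ c) (hc : |c * K| ≤ 1 / 8) (t : ℝ) :
    (iidGaussVec N d 1).real
        {G | t ≤ |∑ i, (truncation centeredNormSq K (G i) * (x ⬝ᵥ G i) ^ 2 - 2)|}
      ≤ 2 * Real.exp (c * (8 * √d * Real.exp (-K / (4 * (8 * √d))) * 66)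
        + c ^ 2 * ((8 * √d) ^ 2 * 98340)) ^ N * Real.exp (-(c * t)) := by
  have ha : (0 : ℝ) < 8 * √d := by positivity
  -- `3 / 8` is chosen so that `(1 - 2 * (3 / 8)) ^ (-1 / 2) = 2`.
  have hq : ExpMomentLE (fun g => 3 / 8 * (x ⬝ᵥ g) ^ 2) 2 (gaussVec d 1) := by
    refine (expMomentLE_mul_sq_dotProduct hx (by norm_num)).mono (le_of_eq ?_)
    rw [show (1 : ℝ) - 2 * (3 / 8) = (1 / 2) ^ 2 by norm_num, Real.sqrt_sq (by norm_num)]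
    norm_num
  have htail := measureReal_abs_sum_truncation_mul_sq_sub_integral_ge_le (ι := Fin N)
    (w := centeredNormSq) (q := (x ⬝ᵥ ·)) ha (by fun_prop) (by fun_prop)
    (expMomentLE_abs_centeredNormSq hd) hq hc0 hc t
  rw [integral_centeredNormSq_mul_sq_dotProduct hx, Fintype.card_fin] at htail
  -- With exponential moments `A = 3`, `B = 2`: `2 A + 30 B = 66` and `12 A + 49152 B = 98340`.
  norm_num only at htail ⊢
  exact htail

lemma measureReal_specNorm_fourthMomentDeviation_gt_le (hd : 1 ≤ d) {K c t : ℝ} (hc0 : 0 ≤ c)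
    (hc : |c * K| ≤ 1 / 8) (ht : 0 ≤ t) :
    (iidGaussVec N d 1).real {G | 32 * t < specNorm (fourthMomentDeviation G)}
      ≤ N * (3 * Real.exp (-(K / (8 * √d))))
        + 5 ^ d * (2 * Real.exp (c * (8 * √d * Real.exp (-K / (4 * (8 * √d))) * 66)
          + c ^ 2 * ((8 * √d) ^ 2 * 98340)) ^ N * Real.exp (-(c * t))) := by
  obtain ⟨s, hcard, hs, hnorm⟩ := exists_finset_specNorm_le d
  have hsub : {G : Fin N → Fin d → ℝ | 32 * t < specNorm (fourthMomentDeviation G)} ⊆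
      {G | ∃ i, K ≤ |centeredNormSq (G i)|} ∪
        ⋃ x ∈ s, {G | t ≤ |∑ i, (truncation centeredNormSq K (G i) * (x ⬝ᵥ G i) ^ 2 - 2)|} := by
    intro G hG
    by_contra hcon
    simp only [Set.mem_union, Set.mem_iUnion, Set.mem_ofPred_eq, not_or, not_exists,
      not_le] at hcon
    obtain ⟨hsmall, hsum⟩ := hcon
    refine not_le.2 hG (hnorm _ (isHermitian_fourthMomentDeviation G) t ht fun x hx => ?_)
    rw [dotProduct_fourthMomentDeviation_mulVec G (hs x hx)]
    simpa only [truncation_eq_self (hsmall _)] using (hsum x hx).le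
  refine (measureReal_mono hsub).trans ((measureReal_union_le _ _).trans ?_)
  gcongr
  · exact measureReal_exists_le_abs_centeredNormSq_le hd K
  · refine (measureReal_biUnion_finset_le _ _).trans ((Finset.sum_le_sum fun x hx =>
      measureReal_abs_sum_truncation_centeredNormSq_ge_le hd (hs x hx) hc0 hc t).trans ?_)
    rw [Finset.sum_const, nsmul_eq_mul]
    gcongr
    exact_mod_cast hcard

end UnionBound

section ChoiceOfParameters

variable {δ L a s : ℝ}

lemma one_half_le_log_div {N : ℝ} (hN : 2 ≤ N) (hδ0 : 0 < δ) (hδ1 : δ ≤ 1) :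
    1 / 2 ≤ Real.log (N / δ) := by
  have hlog : Real.log 2 ≤ Real.log (N / δ) :=
    Real.log_le_log (by norm_num) ((le_div_iff₀ hδ0).2 (by linarith))
  linarith [Real.log_two_gt_d9]

lemma five_pow_mul_exp_pow_mul_exp_neg_le {N d : ℕ} {E T : ℝ} (h : N * E - T ≤ -(2 * d + 2 * L)) :
    5 ^ d * (2 * Real.exp E ^ N * Real.exp (-T)) ≤ 2 * Real.exp (-L) ^ 2 := by
  have hfive : (5 : ℝ) ≤ Real.exp 2 := by
    linarith [Real.quadratic_le_exp_of_nonneg (x := 2) zero_le_two]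
  calc 5 ^ d * (2 * Real.exp E ^ N * Real.exp (-T))
      = 2 * (5 ^ d * Real.exp (N * E - T)) := by
        rw [sub_eq_add_neg, Real.exp_add, Real.exp_nat_mul]
        ring
    _ ≤ 2 * (Real.exp 2 ^ d * Real.exp (-(2 * d + 2 * L))) := by gcongr
    _ = 2 * Real.exp (-L) ^ 2 := by
        rw [← Real.exp_nat_mul, ← Real.exp_nat_mul, ← Real.exp_add]
        congr 2
        push_cast
        ring

lemma mul_exp_neg_add_exp_neg_le {N : ℝ} (hN : 2 ≤ N) (hδ0 : 0 < δ) (hδ1 : δ ≤ 1)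
    (hL : Real.exp (-L) = δ / N) :
    N * (3 * Real.exp (-(4 * L))) + 2 * Real.exp (-L) ^ 2 ≤ δ := by
  have hN0 : N ≠ 0 := by linarith
  have hfour : Real.exp (-(4 * L)) = Real.exp (-L) ^ 4 := by
    rw [← Real.exp_nat_mul]
    congr 1
    push_cast
    ring
  have hhalf : δ / N ≤ 1 / 2 := by
    rw [div_le_div_iff₀ (by linarith) two_pos]
    linarith
  rw [hfour, hL]
  calc N * (3 * (δ / N) ^ 4) + 2 * (δ / N) ^ 2
      = δ * (3 * (δ / N) ^ 3 + 2 * δ * N⁻¹ ^ 2) := by field_simp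
    _ ≤ δ * (3 * (1 / 2) ^ 3 + 2 * 1 * 2⁻¹ ^ 2) := by gcongr
    _ ≤ δ := by linarith

lemma mul_chernoffExponent_sub_le {N c : ℝ} (hN : 0 ≤ N) (hNL : N * Real.exp (-L) ≤ 1)
    (hca : c * a ≤ 1) (hcaN : N * (c * a) ^ 2 ≤ s) (hs : 1 ≤ s) :
    N * (c * (a * Real.exp (-L) * 66) + c ^ 2 * (a ^ 2 * 98340)) - 100000 * s ≤ -s := by
  have hbias : c * a * (N * Real.exp (-L)) ≤ 1 := mul_le_one₀ hca (by positivity) hNL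
  linear_combination 66 * hbias + 98340 * hcaN + 1659 * hs

lemma exists_chernoffParameter {N : ℝ} (hN : 0 ≤ N) (hL : 1 / 2 ≤ L) (hs : 0 < s) :
    ∃ b, 0 ≤ b ∧ b ≤ 1 ∧ b * (4 * L) ≤ 1 / 8 ∧ N * b ^ 2 ≤ s ∧
      b * (32 * L * s + √(N * s)) = s := by
  have hR : 0 ≤ √(N * s) := Real.sqrt_nonneg _
  have hden : 0 < 32 * L * s + √(N * s) := by positivity
  obtain ⟨b, hb⟩ : ∃ b, b * (32 * L * s + √(N * s)) = s := ⟨_, div_mul_cancel₀ s hden.ne'⟩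
  have hb0 : 0 ≤ b := nonneg_of_mul_nonneg_left (hb.symm ▸ hs.le) hden
  have hbL : b * (32 * L) ≤ 1 := by
    refine le_of_mul_le_mul_right ?_ hs
    linear_combination hb + mul_nonneg hb0 hR
  have hbR : b * √(N * s) ≤ s := by
    linear_combination hb + mul_nonneg (mul_nonneg hb0 (by linarith : 0 ≤ 32 * L)) hs.le
  refine ⟨b, hb0, by nlinarith, by linarith, ?_, hb⟩
  refine le_of_mul_le_mul_right ?_ hs
  calc N * b ^ 2 * s = (b * √(N * s)) ^ 2 := by
        rw [mul_pow, Real.sq_sqrt (by positivity)]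
        ring
    _ ≤ s ^ 2 := by gcongr
    _ = s * s := pow_two s

end ChoiceOfParameters

lemma measureReal_specNorm_fourthMomentDeviation_gt_log_le {N d : ℕ} {δ : ℝ} (hd : 1 ≤ d)
    (hN : 2 ≤ N) (hδ0 : 0 < δ) (hδ1 : δ ≤ 1) :
    (iidGaussVec N d 1).real {G | 3200000 * (8 * √d * (32 * Real.log (N / δ)
        * (2 * d + 2 * Real.log (N / δ)) + √(N * (2 * d + 2 * Real.log (N / δ)))))
          < specNorm (fourthMomentDeviation G)} ≤ δ := by
  have hN' : (2 : ℝ) ≤ N := by exact_mod_cast hN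
  have hN0 : (0 : ℝ) < N := by linarith
  have hL := one_half_le_log_div hN' hδ0 hδ1
  have hexp : Real.exp (-Real.log (N / δ)) = δ / N := by
    rw [Real.exp_neg, Real.exp_log (by positivity), inv_div]
  set L := Real.log (N / δ)
  set s := 2 * d + 2 * L
  set a := 8 * √(d : ℝ) with hadef
  have ha : 0 < a := by positivity
  have hs : 1 ≤ s := by linarith [(Nat.cast_nonneg d : (0 : ℝ) ≤ d)]
  obtain ⟨b, hb0, hb1, hbL, hbN, hb⟩ := exists_chernoffParameter hN0.le hL (zero_lt_one.trans_le hs)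
  have hca : b / a * a = b := div_mul_cancel₀ b ha.ne'
  have hcK : b / a * (4 * a * L) = b * (4 * L) := by field_simp
  have hct : b / a * (100000 * (a * (32 * L * s + √(N * s)))) = 100000 * s := by
    linear_combination 100000 * (32 * L * s + √(N * s)) * hca + 100000 * hb
  have htail := measureReal_specNorm_fourthMomentDeviation_gt_le (N := N) hd (K := 4 * a * L)
    (t := 100000 * (a * (32 * L * s + √(N * s)))) (div_nonneg hb0 ha.le)
    (by rw [hcK, abs_of_nonneg (by positivity)]; exact hbL) (by positivity)
  rw [← hadef, hct, show 4 * a * L / a = 4 * L by field_simp,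
    show -(4 * a * L) / (4 * a) = -L by field_simp, ← mul_assoc,
    show (32 : ℝ) * 100000 = 3200000 by norm_num] at htail
  have hexponent := mul_chernoffExponent_sub_le hN0.le (by rwa [hexp, mul_div_cancel₀ δ hN0.ne'])
    (hca.trans_le hb1) (by rwa [hca]) hs
  exact htail.trans ((add_le_add_right (five_pow_mul_exp_pow_mul_exp_neg_le hexponent) _).trans
    (mul_exp_neg_add_exp_neg_le hN' hδ0 hδ1 hexp))

section Deviation

variable {x y : ℝ}

lemma mul_pow_four_add_pow_three_mul_sq_le (hx : 1 ≤ x) (hy : 1 / 2 ≤ y) :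
    x * y ^ 4 + x ^ 3 * y ^ 2 ≤ y ^ 6 + 4 * (x * y) ^ 3 := by
  have hmixed : x * y ^ 4 ≤ y ^ 6 + x ^ 3 * y ^ 2 := by
    have hamgm : x * y ^ 2 ≤ y ^ 4 + x ^ 3 := by
      nlinarith [sq_nonneg (x - y ^ 2), pow_le_pow_right₀ hx (show 2 ≤ 3 by norm_num)]
    calc x * y ^ 4 = x * y ^ 2 * y ^ 2 := by ring
      _ ≤ (y ^ 4 + x ^ 3) * y ^ 2 := by gcongr
      _ = y ^ 6 + x ^ 3 * y ^ 2 := by ring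
  have hcubic : x ^ 3 * y ^ 2 ≤ 2 * (x * y) ^ 3 := by
    calc x ^ 3 * y ^ 2 ≤ x ^ 3 * y ^ 2 * (2 * y) :=
          le_mul_of_one_le_right (by positivity) (by linarith)
      _ = 2 * (x * y) ^ 3 := by ring
  linarith

lemma mul_sqrt_two_mul_sq_add_le (hx : 1 ≤ x) (hy : 1 / 2 ≤ y) :
    x * √(2 * x ^ 2 + 2 * y ^ 2) ≤ 6 * (x ^ 2 * y) := by
  have hx2 : 1 ≤ x ^ 2 := one_le_pow₀ hx
  have hy2 : 1 / 4 ≤ y ^ 2 := by nlinarith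
  have hsqrt : √(2 * x ^ 2 + 2 * y ^ 2) ≤ 6 * (x * y) := by
    refine Real.sqrt_le_iff.2 ⟨by positivity, ?_⟩
    linarith [mul_le_mul_of_nonneg_right hx2 (sq_nonneg y),
      mul_le_mul_of_nonneg_left hy2 (sq_nonneg x)]
  calc x * √(2 * x ^ 2 + 2 * y ^ 2) ≤ x * (6 * (x * y)) := by gcongr
    _ = 6 * (x ^ 2 * y) := by ring

lemma mul_pow_three_le_rpow {n : ℝ} (hx : 0 ≤ x) (hy : 0 ≤ y) (hxn : x ^ 2 ≤ n) :
    (x * y) ^ 3 ≤ (n * y ^ 2) ^ (3 / 2 : ℝ) := by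
  calc (x * y) ^ 3 = ((x * y) ^ 2) ^ (3 / 2 : ℝ) := by
        rw [← Real.rpow_natCast_mul (by positivity), ← Real.rpow_natCast]
        norm_num
    _ ≤ _ := by
        rw [mul_pow]
        gcongr

end Deviation

lemma sqrt_mul_deviation_le {N n d L : ℝ} (hN : 0 ≤ N) (hd : 1 ≤ d) (hdn : d ≤ n)
    (hL : 1 / 2 ≤ L) :
    8 * √d * (32 * L * (2 * d + 2 * L) + √(N * (2 * d + 2 * L)))
      ≤ 2048 * (n * √N * √L + ((n * L) ^ (3 / 2 : ℝ) + L ^ 3)) := by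
  have hn : 0 ≤ n := by linarith
  have hx : 1 ≤ √d := Real.one_le_sqrt.2 hd
  have hy : 1 / 2 ≤ √L := Real.le_sqrt_of_sq_le (by linarith)
  have hdx : √d ^ 2 = d := Real.sq_sqrt (by linarith)
  have hLy : √L ^ 2 = L := Real.sq_sqrt (by linarith)
  have hpow := mul_pow_four_add_pow_three_mul_sq_le hx hy
  have hsqrt : √d * √(2 * d + 2 * L) ≤ 6 * (n * √L) := by
    have h := mul_sqrt_two_mul_sq_add_le hx hy
    rw [hdx, hLy] at h
    exact h.trans (by gcongr)
  have hrpow := mul_pow_three_le_rpow (Real.sqrt_nonneg d) (Real.sqrt_nonneg L) (hdx.trans_le hdn)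
  rw [hLy] at hrpow
  have hcubic : √d * √L ^ 4 + √d ^ 3 * √L ^ 2 ≤ L ^ 3 + 4 * (n * L) ^ (3 / 2 : ℝ) := by
    have hsix : √L ^ 6 = L ^ 3 := by rw [← hLy, ← pow_mul, Real.sqrt_sq (Real.sqrt_nonneg L)]
    linarith
  have hmain : 0 ≤ n * √N * √L := by positivity
  have hcube : 0 ≤ L ^ 3 := pow_nonneg (by linarith) 3
  calc 8 * √d * (32 * L * (2 * d + 2 * L) + √(N * (2 * d + 2 * L)))
      = 512 * (√d * √L ^ 4 + √d ^ 3 * √L ^ 2) + 8 * √N * (√d * √(2 * d + 2 * L)) := by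
        rw [Real.sqrt_mul hN, show √L ^ 4 = (√L ^ 2) ^ 2 by ring,
          show √d ^ 3 = √d ^ 2 * √d by ring, hLy, hdx]
        ring
    _ ≤ 512 * (L ^ 3 + 4 * (n * L) ^ (3 / 2 : ℝ)) + 8 * √N * (6 * (n * √L)) := by
        gcongr
    _ ≤ _ := by linarith

lemma ofReal_one_sub_le_of_measureReal_compl_le {Ω : Type*} [MeasurableSpace Ω] {μ : Measure Ω}
    [IsProbabilityMeasure μ] {s : Set Ω} {δ : ℝ} (h : μ.real sᶜ ≤ δ) :
    ENNReal.ofReal (1 - δ) ≤ μ s := by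
  have huniv := measureReal_union_le (μ := μ) s sᶜ
  rw [Set.union_compl_self, probReal_univ] at huniv
  exact ENNReal.ofReal_le_of_le_toReal (show 1 - δ ≤ μ.real s by linarith)

lemma inv_sq_mul_deviation_eq {N : ℝ} (hN : 0 < N) (n ℓ b : ℝ) :
    (N ^ 2)⁻¹ * (n * √N * ℓ + b) = n * ℓ / N ^ (3 / 2 : ℝ) + b / N ^ 2 := by
  have hpow : N ^ 2 = N ^ (3 / 2 : ℝ) * √N := by
    rw [Real.sqrt_eq_rpow, ← Real.rpow_add hN]
    norm_num
  have hmain : (N ^ 2)⁻¹ * (n * √N * ℓ) = n * ℓ / N ^ (3 / 2 : ℝ) := by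
    rw [hpow]
    field_simp
  rw [mul_add, hmain]
  ring

lemma specNorm_sum_sub_eq_of_smul {N d : ℕ} (hN : 0 < N) (G : Fin N → Fin d → ℝ) :
    specNorm ((∑ i, ((∑ l, (√((N : NNReal)⁻¹ : NNReal) • G) i l ^ 2) - (d : ℝ) / N) •
          vecMulVec ((√((N : NNReal)⁻¹ : NNReal) • G) i) ((√((N : NNReal)⁻¹ : NNReal) • G) i))
        - ((2 : ℝ) / N) • (1 : Matrix (Fin d) (Fin d) ℝ))
      = ((N : ℝ) ^ 2)⁻¹ * specNorm (fourthMomentDeviation G) := by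
  have : (0 : ℝ) < N := by exact_mod_cast hN
  set r := √((N : NNReal)⁻¹ : NNReal) with hr
  have hr2 : r ^ 2 = (N : ℝ)⁻¹ := by rw [hr, Real.sq_sqrt (NNReal.coe_nonneg _)]; simp
  have hr4 : r ^ 4 = ((N : ℝ) ^ 2)⁻¹ := by rw [show r ^ 4 = (r ^ 2) ^ 2 by ring, hr2, inv_pow]
  have hcenter : (d : ℝ) / N = r ^ 2 * d := by rw [hr2]; ring
  have hmean : (2 : ℝ) / N = 2 * N * r ^ 4 := by rw [hr4]; field_simp
  rw [hcenter, hmean, sum_smul_vecMulVec_smul_sub_eq, specNorm_smul, hr4,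
    abs_of_nonneg (by positivity)]

lemma ofReal_one_sub_le_iidGaussVec_inv {N d : ℕ} {δ : ℝ} (hd : 1 ≤ d) (hN : 2 ≤ N)
    (hδ0 : 0 < δ) (hδ1 : δ ≤ 1) {n : ℝ} (hdn : d ≤ n) :
    ENNReal.ofReal (1 - δ) ≤ iidGaussVec N d (N : NNReal)⁻¹
      {B | specNorm ((∑ i, ((∑ l, B i l ^ 2) - (d : ℝ) / N) • vecMulVec (B i) (B i))
            - ((2 : ℝ) / N) • (1 : Matrix (Fin d) (Fin d) ℝ))
        ≤ 6553600000 * (n * √(Real.log (N / δ)) / (N : ℝ) ^ (3 / 2 : ℝ)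
            + ((n * Real.log (N / δ)) ^ (3 / 2 : ℝ) + Real.log (N / δ) ^ 3) / (N : ℝ) ^ 2)} := by
  have hN0 : (0 : ℝ) < N := by positivity
  have hscale := measurable_const_smul (α := Fin N → Fin d → ℝ) √((N : NNReal)⁻¹ : NNReal)
  rw [iidGaussVec_eq_map_smul]
  refine le_trans ?_ (Measure.le_map_apply hscale.aemeasurable _)
  refine ofReal_one_sub_le_of_measureReal_compl_le ((measureReal_mono fun G hG => ?_).trans
    (measureReal_specNorm_fourthMomentDeviation_gt_log_le hd hN hδ0 hδ1))
  simp only [Set.mem_compl_iff, Set.mem_preimage, Set.mem_ofPred_eq, not_le] at hG ⊢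
  rw [specNorm_sum_sub_eq_of_smul (by lia), ← inv_sq_mul_deviation_eq hN0, mul_left_comm,
    mul_lt_mul_iff_right₀ (by positivity)] at hG
  refine lt_of_le_of_lt ?_ hG
  linarith [sqrt_mul_deviation_le hN0.le (by exact_mod_cast hd) hdn
    (one_half_le_log_div (N := N) (by exact_mod_cast hN) hδ0 hδ1)]

lemma specNorm_eq_zero_of_isEmpty {m k : ℕ} [IsEmpty (Fin k)] (M : Matrix (Fin m) (Fin k) ℝ) :
    specNorm M = 0 := by
  rw [Subsingleton.elim M 0]
  simp only [specNorm, map_zero, norm_zero]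

theorem stmt_5_general :
    ∃ C : ℝ, 0 < C ∧
      ∀ (N n : ℕ) (δ : ℝ), 1 ≤ n → min n 2 ≤ N → 0 < δ → δ < 1 →
        ENNReal.ofReal (1 - δ) ≤
          (iidGaussVec N (n - 1) ((N : NNReal))⁻¹)
            {B | specNorm
                ((∑ i, ((∑ l, (B i l) ^ 2) - ((n : ℝ) - 1) / N)
                      • Matrix.vecMulVec (B i) (B i))
                  - ((2 : ℝ) / N) • (1 : Matrix (Fin (n - 1)) (Fin (n - 1)) ℝ))
              ≤ C * (n * Real.sqrt (Real.log (N / δ)) / (N : ℝ) ^ ((3 : ℝ) / 2)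
                  + ((n * Real.log (N / δ)) ^ ((3 : ℝ) / 2) + (Real.log (N / δ)) ^ 3)
                      / (N : ℝ) ^ 2)} := by
  refine ⟨6553600000, by norm_num, fun N n δ hn hnN hδ0 hδ1 => ?_⟩
  obtain ⟨d, rfl⟩ := Nat.exists_eq_add_of_le' hn
  simp only [Nat.cast_add_one, add_sub_cancel_right]
  rcases Nat.eq_zero_or_pos d with rfl | hd
  · have hN : (1 : ℝ) ≤ N := by exact_mod_cast hnN
    have hlog : 0 ≤ Real.log (N / δ) :=
      Real.log_nonneg ((one_le_div hδ0).2 (hδ1.le.trans hN))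
    have : IsEmpty (Fin (0 + 1 - 1)) := Fin.isEmpty
    refine (ENNReal.ofReal_le_one.2 (by linarith)).trans_eq (measure_univ.symm.trans
      (congrArg _ (Set.eq_univ_of_forall fun B => ?_).symm))
    rw [Set.mem_ofPred_eq, specNorm_eq_zero_of_isEmpty]
    positivity
  · exact ofReal_one_sub_le_iidGaussVec_inv hd (by lia) hδ0 hδ1.le (by simp)

/-- with `b_1, …, b_N` i.i.d. `N(0, (1/N) I_{n-1})`, there is a universal
constant `C > 0` such that for any `δ ∈ (0,1)`, with probability at least `1 - δ`,
`‖∑_i (‖b_i‖² - (n-1)/N) b_i b_iᵀ - (2/N) I_{n-1}‖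
  ≤ C (n √(log(N/δ))/N^{3/2} + ((n log(N/δ))^{3/2} + log³(N/δ))/N²)` in spectral norm. -/
theorem stmt_5 :
    ∃ C : ℝ, 0 < C ∧
      ∀ (N n : ℕ) (δ : ℝ), 1 ≤ n → n ≤ N → 0 < δ → δ < 1 →
        ENNReal.ofReal (1 - δ) ≤
          (iidGaussVec N (n - 1) ((N : NNReal))⁻¹)
            {B | specNorm
                ((∑ i, ((∑ l, (B i l) ^ 2) - ((n : ℝ) - 1) / N)
                      • Matrix.vecMulVec (B i) (B i))
                  - ((2 : ℝ) / N) • (1 : Matrix (Fin (n - 1)) (Fin (n - 1)) ℝ))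
              ≤ C * (n * Real.sqrt (Real.log (N / δ)) / (N : ℝ) ^ ((3 : ℝ) / 2)
                  + ((n * Real.log (N / δ)) ^ ((3 : ℝ) / 2) + (Real.log (N / δ)) ^ 3)
                      / (N : ℝ) ^ 2)} := by
  obtain ⟨C, hC, h⟩ := stmt_5_general
  exact ⟨C, hC, fun N n δ hn hnN => h N n δ hn ((min_le_left n 2).trans hnN)⟩
end
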